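/- For every fixed constant B < ∞ there is an absolute constant C < ∞ such that, for all sufficiently large n and every 1 ≤ k ≤ n, the half-lazy k-column transvection walk satisfies τ_mix(Q_{n,k}) ≤ C·n·k·log n (with C independent of n and k and universal). -/

import Mathlib

open Finset

noncomputable section

def tvDist {X : Type*} [Fintype X] (f g : X → ℝ) : ℝ := (1/2) * ∑ x, |f x - g x|

open Classical in
def unifOn {X : Type*} [Fintype X] (G : Set X) : X → ℝ :=
  fun x => if x ∈ G then (Nat.card G : ℝ)⁻¹ else 0

def mixTime {X : Type*} [Fintype X] [DecidableEq X] (Q : Matrix X X ℝ) (π : X → ℝ)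
    (start : Set X) : ℕ :=
  sInf {t : ℕ | ∀ x ∈ start, tvDist ((Q ^ t) x) π ≤ 1 / 4}

abbrev TState (n k : ℕ) := Fin n → (Fin k → ZMod 2)

def Stief (n k : ℕ) : Set (TState n k) :=
  {z | Submodule.span (ZMod 2) (Set.range z) = ⊤}

def transP (n k : ℕ) : Matrix (TState n k) (TState n k) ℝ :=
  fun z w => (∑ a : Fin n, ∑ b : Fin n,
    if a ≠ b ∧ w = Function.update z b (z b + z a) then (1 : ℝ) else 0) / ((n : ℝ) * ((n : ℝ) - 1))

def transQ (n k : ℕ) : Matrix (TState n k) (TState n k) ℝ :=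
  (2⁻¹ : ℝ) • ((1 : Matrix (TState n k) (TState n k) ℝ) + transP n k)

/-!
Each row operation is an involution, so a step of the walk lowers the relative entropy of the law
with respect to the uniform law by the average entropy produced by the row operations. It therefore
suffices to bound the relative entropy by the total production; a Pinsker-type inequality then
bounds the total variation distance.

If `n ≤ 260 k`, the time `n k log n` is of order `n ^ 2 log n`. For the square walk, `k = n`, the
entropy inequality holds with an absolute constant: reveal the rows one after the other and compare
the law of each new row with its average over the random combinations that the row operations add to
it. Deleting columns maps the square walk onto the walk with fewer columns.

If `260 k ≤ n`, colour the rows randomly with `q ≈ n / (130 k)` colours. If the rows of one colour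
span, then adding random combinations of them re-randomises all other rows, so the relative entropy
exceeds that of the coloured rows by at most the production of the row operations from that colour
class to its complement. The relative entropies of two disjoint classes add up to at most that of
all rows, so two colours yield the entropy inequality, in which a given row operation occurs with
probability at most `1 / q`. A colour class is likely to span as soon as no nonzero functional
vanishes on almost all rows, and a Lyapunov function in the weights of the functionals shows that
such functionals have disappeared after `O(n k + n log n)` steps.
-/

open scoped BigOperators

/-! ### Entropy and its production along involutions -/

section Entropy

variable {X : Type*} [Fintype X]

/-- The negative Shannon entropy `∑ μ log μ` of a weight function on a finite type. -/
def negEntropy (μ : X → ℝ) : ℝ := ∑ x, μ x * Real.log (μ x)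

/-- The negative entropy lost when `μ` is replaced by its average `(μ + μ ∘ σ) / 2` under an
involution `σ`, written as a sum of Jensen gaps of `x ↦ x * log x`. -/
def entropyProduction (σ : X → X) (μ : X → ℝ) : ℝ :=
  ∑ x, ((μ x * Real.log (μ x) + μ (σ x) * Real.log (μ (σ x))) / 2
    - (μ x + μ (σ x)) / 2 * Real.log ((μ x + μ (σ x)) / 2))

lemma midpoint_mul_log_le {a b : ℝ} (ha : 0 ≤ a) (hb : 0 ≤ b) :
    (a + b) / 2 * Real.log ((a + b) / 2) ≤ (a * Real.log a + b * Real.log b) / 2 := by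
  have h := Real.convexOn_mul_log.2 (Set.mem_Ici.2 ha) (Set.mem_Ici.2 hb)
    (by norm_num : (0 : ℝ) ≤ 1 / 2) (by norm_num : (0 : ℝ) ≤ 1 / 2) (by norm_num)
  simp only [smul_eq_mul, show 1 / 2 * a + 1 / 2 * b = (a + b) / 2 by ring] at h
  linarith

lemma entropyProduction_nonneg (σ : X → X) {μ : X → ℝ} (hμ : 0 ≤ μ) :
    0 ≤ entropyProduction σ μ :=
  sum_nonneg fun x _ ↦ sub_nonneg.2 (midpoint_mul_log_le (hμ x) (hμ (σ x)))

lemma mul_log_le_mul_log_add_sub {a p : ℝ} (ha : 0 ≤ a) (hp : 0 ≤ p) (hap : a ≠ 0 → 0 < p) :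
    a * Real.log p ≤ a * Real.log a + (p - a) := by
  rcases ha.eq_or_lt with rfl | ha
  · simpa using hp
  have hp := hap ha.ne'
  have h := mul_le_mul_of_nonneg_left (Real.log_le_sub_one_of_pos (div_pos hp ha)) ha.le
  rw [Real.log_div hp.ne' ha.ne', mul_sub, mul_sub, mul_div_cancel₀ _ ha.ne'] at h
  linarith

lemma mul_log_add_mul_log_le {a b p q : ℝ} (ha : 0 ≤ a) (hb : 0 ≤ b) (hp : 0 ≤ p) (hq : 0 ≤ q)
    (hap : a ≠ 0 → 0 < p) (hbq : b ≠ 0 → 0 < q) :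
    a * Real.log p + b * Real.log q ≤
      a * Real.log a + b * Real.log b - 2 * ((a + b) / 2 * Real.log ((a + b) / 2))
        + (a + b) * Real.log ((p + q) / 2) := by
  rcases (add_nonneg ha hb).eq_or_lt with hab | hab
  · obtain rfl : a = 0 := by linarith
    obtain rfl : b = 0 := by linarith
    simp
  have hpq : 0 < p + q := by
    rcases ha.eq_or_lt with rfl | ha
    · linarith [hbq (by linarith)]
    · linarith [hap ha.ne']
  set m := (a + b) / 2 with hm
  set r := (p + q) / 2 with hr
  have hm0 : 0 < m := by positivity
  have hr0 : 0 < r := by positivity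
  have rescale {c s : ℝ} (hc : 0 ≤ c) (hs : 0 ≤ s) (hcs : c ≠ 0 → 0 < s) :
      c * Real.log s ≤ c * Real.log c + (s * (m / r) - c) - c * Real.log m + c * Real.log r := by
    have h := mul_log_le_mul_log_add_sub hc (mul_nonneg hs (div_pos hm0 hr0).le)
      fun h ↦ mul_pos (hcs h) (div_pos hm0 hr0)
    rcases eq_or_ne c 0 with rfl | hc0
    · simpa using h
    rw [Real.log_mul (hcs hc0).ne' (div_pos hm0 hr0).ne', Real.log_div hm0.ne' hr0.ne'] at h
    linarith
  have hcancel : p * (m / r) + q * (m / r) = a + b := by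
    rw [← add_mul, show p + q = 2 * r by rw [hr]; ring, mul_assoc, mul_div_cancel₀ _ hr0.ne', hm]
    ring
  have hsum : 2 * (m * Real.log m) = a * Real.log m + b * Real.log m := by
    rw [← add_mul, show a + b = 2 * m by rw [hm]; ring]
    ring
  linarith [rescale ha hp hap, rescale hb hq hbq]

lemma sum_mul_log_le_entropyProduction_add {σ : X → X} (hσ : Function.Involutive σ)
    {Γ : Finset X} (hΓ : ∀ x, σ x ∈ Γ ↔ x ∈ Γ) {μ g : X → ℝ} (hμ : 0 ≤ μ) (hg : 0 ≤ g)
    (hpos : ∀ x ∈ Γ, μ x ≠ 0 → 0 < g x) :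
    ∑ x ∈ Γ, μ x * Real.log (g x) ≤
      entropyProduction σ μ + ∑ x ∈ Γ, μ x * Real.log ((g x + g (σ x)) / 2) := by
  have reindex (F : X → ℝ) : ∑ x ∈ Γ, F (σ x) = ∑ x ∈ Γ, F x :=
    sum_equiv hσ.toPerm (fun x ↦ (hΓ x).symm) fun _ _ ↦ rfl
  have two_point : ∀ x ∈ Γ, μ x * Real.log (g x) + μ (σ x) * Real.log (g (σ x)) ≤
      2 * ((μ x * Real.log (μ x) + μ (σ x) * Real.log (μ (σ x))) / 2
        - (μ x + μ (σ x)) / 2 * Real.log ((μ x + μ (σ x)) / 2)) +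
      (μ x * Real.log ((g x + g (σ x)) / 2) +
        μ (σ x) * Real.log ((g (σ x) + g (σ (σ x))) / 2)) := by
    intro x hx
    have h := mul_log_add_mul_log_le (hμ x) (hμ (σ x)) (hg x) (hg (σ x)) (hpos x hx)
      (hpos _ ((hΓ x).2 hx))
    rw [hσ x, add_comm (g (σ x)) (g x)]
    linarith
  have hsum := sum_le_sum two_point
  rw [sum_add_distrib, sum_add_distrib, sum_add_distrib, ← mul_sum,
    reindex fun x ↦ μ x * Real.log (g x),
    reindex fun x ↦ μ x * Real.log ((g x + g (σ x)) / 2)] at hsum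
  have hle : ∑ x ∈ Γ, ((μ x * Real.log (μ x) + μ (σ x) * Real.log (μ (σ x))) / 2
      - (μ x + μ (σ x)) / 2 * Real.log ((μ x + μ (σ x)) / 2)) ≤ entropyProduction σ μ :=
    sum_le_sum_of_subset_of_nonneg (subset_univ _)
      fun x _ _ ↦ sub_nonneg.2 (midpoint_mul_log_le (hμ x) (hμ (σ x)))
  linarith

lemma sum_midpoint_mul_log {σ : X → X} (hσ : Function.Involutive σ) (μ : X → ℝ) :
    ∑ x, (μ x + μ (σ x)) / 2 * Real.log ((μ x + μ (σ x)) / 2) =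
      negEntropy μ - entropyProduction σ μ := by
  have reindex : ∑ x, μ (σ x) * Real.log (μ (σ x)) = ∑ x, μ x * Real.log (μ x) :=
    Equiv.sum_comp hσ.toPerm fun x ↦ μ x * Real.log (μ x)
  rw [negEntropy, entropyProduction, sum_sub_distrib, ← sum_div, sum_add_distrib, reindex]
  ring

end Entropy

/-! ### Lazy random walks driven by involutions -/

section LazyStep

variable {X κ : Type*} {s : Finset κ} {σ : κ → X → X}

/-- One step of the half-lazy walk which otherwise applies `σ p` for a uniformly random `p ∈ s`.
As the `σ p` will be involutions, it acts in the same way on laws and on observables. -/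
def lazyStep (s : Finset κ) (σ : κ → X → X) (f : X → ℝ) (x : X) : ℝ :=
  (f x + 𝔼 p ∈ s, f (σ p x)) / 2

lemma lazyStep_nonneg {f : X → ℝ} (hf : 0 ≤ f) : 0 ≤ lazyStep s σ f := fun x ↦
  div_nonneg (add_nonneg (hf x) (expect_nonneg fun p _ ↦ hf (σ p x))) two_pos.le

variable [Fintype X]

lemma sum_lazyStep_mul (hσ : ∀ p ∈ s, Function.Involutive (σ p)) (f g : X → ℝ) :
    ∑ x, lazyStep s σ f x * g x = ∑ x, f x * lazyStep s σ g x := by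
  have move (p : κ) (hp : p ∈ s) : ∑ x, f (σ p x) * g x = ∑ x, f x * g (σ p x) := by
    rw [← Equiv.sum_comp (hσ p hp).toPerm fun x ↦ f x * g (σ p x)]
    simp [hσ p hp _]
  have expand (f g : X → ℝ) : ∑ x, (f x + 𝔼 p ∈ s, f (σ p x)) * g x =
      ∑ x, f x * g x + 𝔼 p ∈ s, ∑ x, f (σ p x) * g x := by
    simp_rw [add_mul, sum_add_distrib, expect_mul]
    rw [expect_sum_comm]
  calc ∑ x, lazyStep s σ f x * g x = (∑ x, (f x + 𝔼 p ∈ s, f (σ p x)) * g x) / 2 := by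
        rw [sum_div]; exact sum_congr rfl fun x _ ↦ by rw [lazyStep]; ring
    _ = (∑ x, (g x + 𝔼 p ∈ s, g (σ p x)) * f x) / 2 := by
        rw [expand f g, expand g f, expect_congr rfl move]; simp_rw [mul_comm]
    _ = ∑ x, f x * lazyStep s σ g x := by
        rw [sum_div]; exact sum_congr rfl fun x _ ↦ by rw [lazyStep]; ring

lemma sum_lazyStep (hs : s.Nonempty) (hσ : ∀ p ∈ s, Function.Involutive (σ p)) (f : X → ℝ) :
    ∑ x, lazyStep s σ f x = ∑ x, f x := by
  simpa [lazyStep, hs] using sum_lazyStep_mul hσ f 1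

lemma lazyStep_mem_stdSimplex (hs : s.Nonempty) (hσ : ∀ p ∈ s, Function.Involutive (σ p))
    {μ : X → ℝ} (hμ : μ ∈ stdSimplex ℝ X) : lazyStep s σ μ ∈ stdSimplex ℝ X :=
  ⟨lazyStep_nonneg hμ.1, (sum_lazyStep hs hσ μ).trans hμ.2⟩

lemma negEntropy_lazyStep_le (hs : s.Nonempty) (hσ : ∀ p ∈ s, Function.Involutive (σ p))
    {μ : X → ℝ} (hμ : 0 ≤ μ) :
    negEntropy (lazyStep s σ μ) ≤ negEntropy μ - 𝔼 p ∈ s, entropyProduction (σ p) μ := by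
  have jensen (x : X) : lazyStep s σ μ x * Real.log (lazyStep s σ μ x) ≤
      𝔼 p ∈ s, (μ x + μ (σ p x)) / 2 * Real.log ((μ x + μ (σ p x)) / 2) := by
    have hstep : lazyStep s σ μ x = 𝔼 p ∈ s, (μ x + μ (σ p x)) / 2 := by
      rw [lazyStep, ← expect_div, expect_add_distrib, expect_const hs]
    have h := Real.convexOn_mul_log.map_sum_le (t := s) (w := fun _ ↦ (#s : ℝ)⁻¹)
      (p := fun p ↦ (μ x + μ (σ p x)) / 2) (fun _ _ ↦ by positivity)
      (by simp [hs.card_pos.ne'])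
      (fun p _ ↦ Set.mem_Ici.2 (div_nonneg (add_nonneg (hμ x) (hμ (σ p x))) two_pos.le))
    simpa only [hstep, expect_eq_sum_div_card, sum_div, smul_eq_mul, inv_mul_eq_div] using h
  calc negEntropy (lazyStep s σ μ)
      ≤ ∑ x, 𝔼 p ∈ s, (μ x + μ (σ p x)) / 2 * Real.log ((μ x + μ (σ p x)) / 2) :=
        sum_le_sum fun x _ ↦ jensen x
    _ = 𝔼 p ∈ s, (negEntropy μ - entropyProduction (σ p) μ) := by
        rw [← expect_sum_comm]
        exact expect_congr rfl fun p hp ↦ sum_midpoint_mul_log (hσ p hp) μ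
    _ = negEntropy μ - 𝔼 p ∈ s, entropyProduction (σ p) μ := by
        rw [expect_sub_distrib, expect_const hs]

end LazyStep

lemma le_exp_mul_of_contraction {u : ℕ → ℝ} {r C : ℝ} (hr : r ≤ 1) (hC : 0 ≤ C) (h0 : u 0 ≤ C)
    (h : ∀ t, u (t + 1) ≤ (1 - r) * u t) (t : ℕ) : u t ≤ Real.exp (-(r * t)) * C := by
  have hr' : 0 ≤ 1 - r := sub_nonneg.2 hr
  have hpow : (1 - r) ^ t ≤ Real.exp (-(r * t)) := by
    rw [mul_comm, ← mul_neg, Real.exp_nat_mul]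
    exact pow_le_pow_left₀ hr' (Real.one_sub_le_exp_neg r) t
  calc u t ≤ (1 - r) ^ t * u 0 := le_geom hr' t fun k _ ↦ h k
    _ ≤ (1 - r) ^ t * C := by gcongr
    _ ≤ Real.exp (-(r * t)) * C := by gcongr

/-! ### Total variation distance -/

section TotalVariation

variable {X : Type*} [Fintype X]

lemma tvDist_triangle (f g h : X → ℝ) : tvDist f h ≤ tvDist f g + tvDist g h := by
  rw [tvDist, tvDist, tvDist, ← mul_add, ← sum_add_distrib]
  gcongr
  exact abs_sub_le _ _ _

lemma sq_sqrt_sub_sqrt_le {a b : ℝ} (ha : 0 ≤ a) (hb : 0 ≤ b) (hab : b = 0 → a = 0) :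
    (√a - √b) ^ 2 ≤ a * Real.log (a / b) - a + b := by
  rcases ha.eq_or_lt with rfl | ha
  · simp [hb]
  have hb : 0 < b := hb.lt_of_ne' fun h ↦ ha.ne' (hab h)
  have h := Real.one_sub_inv_le_log_of_pos (Real.sqrt_pos.2 (div_pos ha hb))
  rw [Real.log_sqrt (div_pos ha hb).le, Real.sqrt_div ha.le, inv_div] at h
  have h' := mul_le_mul_of_nonneg_left h (mul_nonneg two_pos.le ha.le)
  have hcross : a * (√b / √a) = √a * √b := by
    have := Real.sqrt_pos.2 ha
    nth_rewrite 1 [← Real.mul_self_sqrt ha.le]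
    field_simp
  nlinarith [Real.sq_sqrt ha.le, Real.sq_sqrt hb.le]

/- The Hellinger distance interpolates: Cauchy–Schwarz bounds the total variation distance by it,
and it is at most the relative entropy. -/
lemma sq_tvDist_le_sum_mul_log_div {μ π : X → ℝ} (hμ : μ ∈ stdSimplex ℝ X)
    (hπ : π ∈ stdSimplex ℝ X) (hac : ∀ x, π x = 0 → μ x = 0) :
    tvDist μ π ^ 2 ≤ ∑ x, μ x * Real.log (μ x / π x) := by
  have factor (x : X) : |μ x - π x| = |√(μ x) - √(π x)| * (√(μ x) + √(π x)) := by
    rw [← abs_of_nonneg (add_nonneg (Real.sqrt_nonneg (μ x)) (Real.sqrt_nonneg (π x))), ← abs_mul]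
    congr 1
    nlinarith [Real.sq_sqrt (hμ.1 x), Real.sq_sqrt (hπ.1 x)]
  have hellinger : ∑ x, |√(μ x) - √(π x)| ^ 2 ≤ ∑ x, μ x * Real.log (μ x / π x) := by
    have h := sum_le_sum fun x (_ : x ∈ univ) ↦ sq_sqrt_sub_sqrt_le (hμ.1 x) (hπ.1 x) (hac x)
    rw [sum_add_distrib, sum_sub_distrib, hμ.2, hπ.2] at h
    simpa only [sq_abs, sub_add_cancel] using h
  have mass : ∑ x, (√(μ x) + √(π x)) ^ 2 ≤ 4 := by
    have h := sum_le_sum fun x (_ : x ∈ univ) ↦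
      (by nlinarith [Real.sq_sqrt (hμ.1 x), Real.sq_sqrt (hπ.1 x), sq_nonneg (√(μ x) - √(π x))] :
        (√(μ x) + √(π x)) ^ 2 ≤ 2 * (μ x + π x))
    rw [← mul_sum, sum_add_distrib, hμ.2, hπ.2] at h
    linarith
  have cauchy := sum_mul_sq_le_sq_mul_sq univ (fun x ↦ |√(μ x) - √(π x)|)
    (fun x ↦ √(μ x) + √(π x))
  simp only [← factor] at cauchy
  have hnonneg : 0 ≤ ∑ x, |√(μ x) - √(π x)| ^ 2 := sum_nonneg fun x _ ↦ sq_nonneg _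
  rw [tvDist]
  nlinarith

open scoped Classical in
lemma sum_ite_mem_const (G : Set X) (a : ℝ) : ∑ x, (if x ∈ G then a else 0) = Nat.card G * a := by
  rw [← sum_filter, sum_const, nsmul_eq_mul, ← Fintype.card_subtype, ← Nat.card_eq_fintype_card]

lemma unifOn_mem_stdSimplex {G : Set X} (hG : G.Nonempty) : unifOn G ∈ stdSimplex ℝ X := by
  have := hG.to_subtype
  refine ⟨fun x ↦ by rw [unifOn]; split_ifs <;> positivity, (sum_ite_mem_const G _).trans ?_⟩
  exact mul_inv_cancel₀ (by exact_mod_cast Nat.card_pos.ne')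

lemma sq_tvDist_unifOn_le {G : Set X} {μ : X → ℝ} (hμ : μ ∈ stdSimplex ℝ X)
    (hG : ∀ x, μ x ≠ 0 → x ∈ G) :
    tvDist μ (unifOn G) ^ 2 ≤ negEntropy μ + Real.log (Nat.card G) := by
  have hne : G.Nonempty := by
    obtain ⟨x, -, hx⟩ := exists_ne_zero_of_sum_ne_zero (hμ.2.trans_ne one_ne_zero)
    exact ⟨x, hG x hx⟩
  have hcard : (Nat.card G : ℝ) ≠ 0 := by
    have := hne.to_subtype
    exact_mod_cast Nat.card_pos.ne'
  have hunif {x : X} (hx : μ x ≠ 0) : unifOn G x = (Nat.card G : ℝ)⁻¹ := if_pos (hG x hx)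
  refine (sq_tvDist_le_sum_mul_log_div hμ (unifOn_mem_stdSimplex hne) fun x hx ↦ ?_).trans_eq ?_
  · by_contra h
    exact inv_ne_zero hcard ((hunif h).symm.trans hx)
  · rw [negEntropy, ← one_mul (Real.log _), ← hμ.2, sum_mul, ← sum_add_distrib]
    refine sum_congr rfl fun x _ ↦ ?_
    rcases eq_or_ne (μ x) 0 with h | h
    · simp [h]
    · rw [hunif h, div_inv_eq_mul, Real.log_mul h hcard, mul_add]

end TotalVariation

/-! ### Row operations -/

section RowAdd

variable {ι V : Type*} [DecidableEq ι]

/-- The transvection `z ↦ z^{a→b}`, which adds row `a` to row `b`. -/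
def rowAdd [Add V] (a b : ι) (z : ι → V) : ι → V := Function.update z b (z b + z a)

variable [AddCommGroup V] [Module (ZMod 2) V]

lemma rowAdd_involutive {a b : ι} (hab : a ≠ b) :
    Function.Involutive (rowAdd a b : (ι → V) → ι → V) := fun z ↦ by
  simp [rowAdd, Function.update_of_ne hab, add_assoc, ZModModule.add_self]

lemma span_range_rowAdd {a b : ι} (hab : a ≠ b) (z : ι → V) :
    Submodule.span (ZMod 2) (Set.range (rowAdd a b z)) = Submodule.span (ZMod 2) (Set.range z) := by
  have le (z : ι → V) : Submodule.span (ZMod 2) (Set.range (rowAdd a b z)) ≤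
      Submodule.span (ZMod 2) (Set.range z) := by
    have mem (i : ι) : z i ∈ Submodule.span (ZMod 2) (Set.range z) :=
      Submodule.subset_span (Set.mem_range_self i)
    rw [Submodule.span_le]
    rintro _ ⟨i, rfl⟩
    rcases eq_or_ne i b with rfl | hi
    · simpa only [rowAdd, Function.update_self, SetLike.mem_coe] using add_mem (mem i) (mem a)
    · simpa only [rowAdd, Function.update_of_ne hi, SetLike.mem_coe] using mem i
  exact (le z).antisymm (by simpa only [rowAdd_involutive hab z] using le (rowAdd a b z))

lemma rowAdd_mem_Stief {n k : ℕ} {a b : Fin n} (hab : a ≠ b) (z : TState n k) :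
    rowAdd a b z ∈ Stief n k ↔ z ∈ Stief n k := by
  simp only [Stief, Set.mem_ofPred_eq, span_range_rowAdd hab]

lemma rowAdd_involutive_of_mem_offDiag [Fintype ι] {p : ι × ι} (hp : p ∈ univ.offDiag) :
    Function.Involutive (rowAdd p.1 p.2 : (ι → V) → ι → V) :=
  rowAdd_involutive (mem_offDiag.1 hp).2.2

end RowAdd

section RowStep

lemma cast_card_offDiag (ι : Type*) [Fintype ι] :
    (#(univ : Finset ι).offDiag : ℝ) = Fintype.card ι * ((Fintype.card ι : ℝ) - 1) := by
  classical
  rw [offDiag_card, card_univ, Nat.cast_sub (Nat.le_mul_self _)]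
  push_cast
  ring

lemma univ_offDiag_nonempty {ι : Type*} [Fintype ι] [Nontrivial ι] :
    (univ : Finset ι).offDiag.Nonempty := by
  obtain ⟨a, b, hab⟩ := exists_pair_ne ι
  exact ⟨(a, b), by simpa using hab⟩

variable {ι V : Type*} [Fintype ι] [DecidableEq ι]

/-- One step of the half-lazy transvection walk on the rows of `ι → V`. -/
def rowStep [Add V] (μ : (ι → V) → ℝ) : (ι → V) → ℝ :=
  lazyStep univ.offDiag (fun p ↦ rowAdd p.1 p.2) μ

/-- The entropy produced by the row operations `a → b` with `(a, b) ∈ A`. -/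
def rowProduction [Add V] [Fintype V] (A : Finset (ι × ι)) (μ : (ι → V) → ℝ) : ℝ :=
  ∑ p ∈ A, entropyProduction (rowAdd p.1 p.2) μ

variable [AddCommGroup V] [Fintype V] {μ : (ι → V) → ℝ}

lemma rowProduction_mono {A B : Finset (ι × ι)} (hAB : A ⊆ B) (hμ : 0 ≤ μ) :
    rowProduction A μ ≤ rowProduction B μ :=
  sum_le_sum_of_subset_of_nonneg hAB fun _ _ _ ↦ entropyProduction_nonneg _ hμ

variable [Module (ZMod 2) V]

lemma negEntropy_rowStep_le [Nontrivial ι] (hμ : 0 ≤ μ) :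
    negEntropy (rowStep μ) ≤ negEntropy μ -
      rowProduction univ.offDiag μ / (Fintype.card ι * ((Fintype.card ι : ℝ) - 1)) := by
  have h := negEntropy_lazyStep_le univ_offDiag_nonempty
    (fun p hp ↦ rowAdd_involutive_of_mem_offDiag (V := V) hp) hμ
  rwa [expect_eq_sum_div_card, cast_card_offDiag ι] at h

end RowStep

section TransvectionWalk

variable {n k : ℕ}

lemma transQ_apply_eq_rowStep (z w : TState n k) :
    transQ n k z w = rowStep (Pi.single w 1) z := by
  have hP : transP n k z w =
      𝔼 p ∈ univ.offDiag, (Pi.single w 1 : TState n k → ℝ) (rowAdd p.1 p.2 z) := by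
    have hoff : (univ : Finset (Fin n)).offDiag = univ.filter fun p ↦ p.1 ≠ p.2 := by ext; simp
    rw [transP, expect_eq_sum_div_card, cast_card_offDiag, Fintype.card_fin, hoff, sum_filter,
      ← sum_product', univ_product_univ]
    simp only [Pi.single_apply, rowAdd, ← ite_and, eq_comm (a := w)]
  rw [transQ, Matrix.smul_apply, Matrix.add_apply, hP, Matrix.one_apply, rowStep, lazyStep,
    Pi.single_apply, smul_eq_mul, inv_mul_eq_div]

lemma vecMul_transQ (μ : TState n k → ℝ) : Matrix.vecMul μ (transQ n k) = rowStep μ := by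
  ext w
  simp only [Matrix.vecMul, dotProduct, transQ_apply_eq_rowStep, rowStep]
  rw [← sum_lazyStep_mul fun p hp ↦ rowAdd_involutive_of_mem_offDiag hp]
  simp [Pi.single_apply]

lemma transQ_pow_succ (t : ℕ) (x : TState n k) :
    (transQ n k ^ (t + 1)) x = rowStep ((transQ n k ^ t) x) := by
  rw [← vecMul_transQ, pow_succ]
  rfl

lemma transQ_pow_mem_stdSimplex [Nontrivial (Fin n)] (t : ℕ) (x : TState n k) :
    (transQ n k ^ t) x ∈ stdSimplex ℝ (TState n k) := by
  induction t with
  | zero => exact ⟨fun z ↦ by simp only [pow_zero, Matrix.one_apply]; positivity,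
      by simp [Matrix.one_apply]⟩
  | succ t ih =>
    rw [transQ_pow_succ]
    exact lazyStep_mem_stdSimplex univ_offDiag_nonempty
      (fun p hp ↦ rowAdd_involutive_of_mem_offDiag hp) ih

lemma mem_Stief_of_transQ_pow_ne_zero {x : TState n k} (hx : x ∈ Stief n k) (t : ℕ) :
    ∀ z, (transQ n k ^ t) x z ≠ 0 → z ∈ Stief n k := by
  induction t with
  | zero =>
    intro z hz
    obtain rfl : x = z := by
      by_contra h
      exact hz (by rw [pow_zero, Matrix.one_apply_ne h])
    exact hx
  | succ t ih =>
    intro z hz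
    by_contra hzS
    have vanish (w : TState n k) (hw : w ∉ Stief n k) : (transQ n k ^ t) x w = 0 :=
      not_not.1 (mt (ih w) hw)
    apply hz
    rw [transQ_pow_succ, rowStep, lazyStep, vanish z hzS, expect_congr rfl fun p hp ↦
      vanish _ (mt (rowAdd_mem_Stief (mem_offDiag.1 hp).2.2 z).1 hzS)]
    simp

lemma negEntropy_transQ_pow_succ_le [Nontrivial (Fin n)] (t : ℕ) (x : TState n k) :
    negEntropy ((transQ n k ^ (t + 1)) x) ≤ negEntropy ((transQ n k ^ t) x) -
      rowProduction univ.offDiag ((transQ n k ^ t) x) / (n * (n - 1)) := by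
  rw [transQ_pow_succ]
  simpa only [Fintype.card_fin] using negEntropy_rowStep_le (transQ_pow_mem_stdSimplex t x).1

lemma negEntropy_nonpos {X : Type*} [Fintype X] {μ : X → ℝ} (hμ : μ ∈ stdSimplex ℝ X) :
    negEntropy μ ≤ 0 := by
  refine sum_nonpos fun x _ ↦ ?_
  have hx : μ x ≤ 1 := hμ.2 ▸ single_le_sum (fun y _ ↦ hμ.1 y) (mem_univ x)
  exact mul_nonpos_of_nonneg_of_nonpos (hμ.1 x) (Real.log_nonpos (hμ.1 x) hx)

lemma negEntropy_transQ_pow_add_le [Nontrivial (Fin n)] {x : TState n k} {c γ δ : ℝ} {t₀ : ℕ}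
    (hγ : 0 < γ) (hγn : γ ≤ n * (n - 1)) (hc : 0 ≤ c) (hδ : 0 ≤ δ)
    (h : ∀ t ≥ t₀, negEntropy ((transQ n k ^ t) x) + c ≤
      rowProduction univ.offDiag ((transQ n k ^ t) x) / γ + δ) (t : ℕ) :
    negEntropy ((transQ n k ^ (t₀ + t)) x) + c ≤
      Real.exp (-(γ / (n * (n - 1)) * t)) * c + δ := by
  have hM : (0 : ℝ) < n * (n - 1) := hγ.trans_le hγn
  have contract := le_exp_mul_of_contraction (r := γ / (n * (n - 1))) (C := c)
    (u := fun t ↦ negEntropy ((transQ n k ^ (t₀ + t)) x) + c - δ) ((div_le_one hM).2 hγn) hc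
    (by linarith [negEntropy_nonpos (transQ_pow_mem_stdSimplex (t₀ + 0) x)]) (fun t ↦ ?_) t
  · linarith
  have hstep := negEntropy_transQ_pow_succ_le (t₀ + t) x
  have hprod := mul_le_mul_of_nonneg_left (h (t₀ + t) (by omega)) (div_pos hγ hM).le
  have hcancel : γ / (n * (n - 1)) * (rowProduction univ.offDiag ((transQ n k ^ (t₀ + t)) x) / γ) =
      rowProduction univ.offDiag ((transQ n k ^ (t₀ + t)) x) / (n * (n - 1)) := by
    field_simp
  rw [mul_add _ _ δ, hcancel] at hprod
  rw [← add_assoc]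
  linarith

end TransvectionWalk

/-! ### Random words of row operations -/

section Averages

lemma expect_add_right {G : Type*} [Fintype G] [AddGroup G] (F : G → ℝ) (c : G) :
    𝔼 x, F (x + c) = 𝔼 x, F x :=
  Fintype.expect_equiv (Equiv.addRight c) _ _ fun _ ↦ rfl

lemma expect_comp_addMonoidHom {G H : Type*} [Fintype G] [Fintype H] [AddCommGroup G]
    [AddCommGroup H] (φ : G →+ H) (F : H → ℝ) (hF : ∀ y, ∃ g, ∀ x, F (x + y) = F (x + φ g)) :
    𝔼 g, F (φ g) = 𝔼 y, F y := by
  have translate (y : H) : 𝔼 g, F (φ g + y) = 𝔼 g, F (φ g) := by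
    obtain ⟨c, hc⟩ := hF y
    simp_rw [hc, ← map_add]
    exact expect_add_right (fun g ↦ F (φ g)) c
  calc 𝔼 g, F (φ g) = 𝔼 y, 𝔼 g, F (φ g + y) := by simp_rw [translate, Fintype.expect_const]
    _ = 𝔼 g, 𝔼 y, F (y + φ g) := by rw [expect_comm]; simp_rw [add_comm]
    _ = 𝔼 y, F y := by simp_rw [expect_add_right, Fintype.expect_const]

end Averages

section RowWord

lemma fst_ne_snd_of_mem_product {ι : Type*} {S T : Finset ι} (hST : Disjoint S T) :
    ∀ p ∈ S ×ˢ T, ∀ q ∈ S ×ˢ T, p.1 ≠ q.2 := fun _ hp _ hq ↦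
  disjoint_iff_ne.1 hST _ (mem_product.1 hp).1 _ (mem_product.1 hq).2

variable {ι V : Type*} [DecidableEq ι] [AddCommGroup V] [Module (ZMod 2) V]

/-- The composite of the row operations `a → b` over those `(a, b) ∈ A` with `ε (a, b) = 1`. It is
meant for sets `A` in which no target is a source, so that the operations commute. -/
def rowWord (A : Finset (ι × ι)) (ε : ι × ι → ZMod 2) (z : ι → V) : ι → V :=
  fun i ↦ z i + ∑ p ∈ A, if p.2 = i then ε p • z p.1 else 0

lemma rowWord_empty (ε : ι × ι → ZMod 2) (z : ι → V) : rowWord ∅ ε z = z := by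
  ext; simp [rowWord]

lemma rowWord_zero (A : Finset (ι × ι)) (z : ι → V) : rowWord A 0 z = z := by
  ext; simp [rowWord]

lemma rowWord_insert {A : Finset (ι × ι)} {q : ι × ι} (hq : q ∉ A)
    (hA : ∀ p ∈ insert q A, p.1 ≠ q.2) (ε : ι × ι → ZMod 2) (z : ι → V) :
    rowWord (insert q A) ε z = rowWord A ε (if ε q = 0 then z else rowAdd q.1 q.2 z) := by
  ext i
  obtain h | h : ε q = 0 ∨ ε q = 1 := by generalize ε q = x; revert x; decide
  · simp [rowWord, hq, h]
  · have source : ∀ p ∈ insert q A, rowAdd q.1 q.2 z p.1 = z p.1 := fun p hp ↦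
      Function.update_of_ne (hA p hp) _ _
    have hsum : ∑ p ∈ A, (if p.2 = i then ε p • rowAdd q.1 q.2 z p.1 else 0) =
        ∑ p ∈ A, if p.2 = i then ε p • z p.1 else 0 :=
      sum_congr rfl fun p hp ↦ by rw [source p (mem_insert_of_mem hp)]
    rw [if_neg (h ▸ one_ne_zero : ¬ε q = 0), rowWord, rowWord, sum_insert hq, hsum, h, one_smul,
      ← add_assoc]
    congr 1
    rcases eq_or_ne q.2 i with rfl | hi
    · simp [rowAdd]
    · simp [rowAdd, hi, hi.symm]

lemma rowWord_add_single {A : Finset (ι × ι)} {q : ι × ι} (hq : q ∉ A) (ε : ι × ι → ZMod 2)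
    (c : ZMod 2) (z : ι → V) : rowWord A (ε + Pi.single q c) z = rowWord A ε z := by
  ext i
  refine congrArg (z i + ·) (sum_congr rfl fun p hp ↦ ?_)
  simp [Pi.single_eq_of_ne (ne_of_mem_of_not_mem hp hq)]

lemma half_expect_rowWord_add [Fintype ι] {A : Finset (ι × ι)} {q : ι × ι} (hq : q ∉ A)
    (hA : ∀ p ∈ insert q A, p.1 ≠ q.2) (g : (ι → V) → ℝ) (z : ι → V) :
    ((𝔼 ε, g (rowWord A ε z)) + 𝔼 ε, g (rowWord A ε (rowAdd q.1 q.2 z))) / 2 =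
      𝔼 ε, g (rowWord (insert q A) ε z) := by
  have pair (ε : ι × ι → ZMod 2) : g (rowWord A ε z) + g (rowWord A ε (rowAdd q.1 q.2 z)) =
      g (rowWord (insert q A) ε z) + g (rowWord (insert q A) (ε + Pi.single q 1) z) := by
    rw [rowWord_insert hq hA, rowWord_insert hq hA, rowWord_add_single hq]
    obtain h | h : ε q = 0 ∨ ε q = 1 := by generalize ε q = x; revert x; decide
    · simp [h]
    · simp [h, add_comm, CharTwo.add_self_eq_zero]
  rw [← expect_add_distrib, expect_congr rfl fun ε _ ↦ pair ε, expect_add_distrib,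
    expect_add_right fun ε ↦ g (rowWord (insert q A) ε z)]
  ring

/- Each generator costs its entropy production by the two-point inequality; multiplying the
generators of the word in one at a time turns `g` into its average over all words. -/
lemma sum_mul_log_le_rowProduction_add [Fintype ι] [Fintype V] {A : Finset (ι × ι)}
    (hA : ∀ p ∈ A, ∀ q ∈ A, p.1 ≠ q.2) {Γ : Finset (ι → V)}
    (hΓ : ∀ p ∈ A, ∀ z, rowAdd p.1 p.2 z ∈ Γ ↔ z ∈ Γ) {μ g : (ι → V) → ℝ} (hμ : 0 ≤ μ)
    (hg : 0 ≤ g) (hpos : ∀ z ∈ Γ, μ z ≠ 0 → 0 < g z) :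
    ∑ z ∈ Γ, μ z * Real.log (g z) ≤
      rowProduction A μ + ∑ z ∈ Γ, μ z * Real.log (𝔼 ε, g (rowWord A ε z)) := by
  induction A using Finset.induction_on with
  | empty => simp [rowProduction, rowWord_empty]
  | insert q A hq ih =>
    have hqmem := mem_insert_self q A
    have induct := ih
      (fun p hp r hr ↦ hA p (mem_insert_of_mem hp) r (mem_insert_of_mem hr))
      fun p hp ↦ hΓ p (mem_insert_of_mem hp)
    have generator := sum_mul_log_le_entropyProduction_add
      (rowAdd_involutive (V := V) (hA q hqmem q hqmem)) (hΓ q hqmem) hμ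
      (g := fun z ↦ 𝔼 ε, g (rowWord A ε z)) (fun z ↦ expect_nonneg fun ε _ ↦ hg _)
      fun z hz h ↦ expect_pos' (fun ε _ ↦ hg _)
        ⟨0, mem_univ _, by rw [rowWord_zero]; exact hpos z hz h⟩
    simp only [half_expect_rowWord_add hq fun p hp ↦ hA p hp q hqmem] at generator
    rw [rowProduction, sum_insert hq, ← rowProduction]
    linarith

end RowWord

/-! ### Marginal densities -/

section MarginalDensity

variable {ι V : Type*} [Fintype ι] [DecidableEq ι] [Fintype V]

/-- The density, with respect to the uniform law, of the marginal of `μ` on the rows in `S`. -/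
def marginalDensity (μ : (ι → V) → ℝ) (S : Finset ι) (z : ι → V) : ℝ :=
  ∑ y, μ (S.piecewise z y)

variable {μ : (ι → V) → ℝ} {S : Finset ι}

lemma marginalDensity_nonneg (hμ : 0 ≤ μ) (S : Finset ι) : 0 ≤ marginalDensity μ S := fun _ ↦
  sum_nonneg fun _ _ ↦ hμ _

lemma marginalDensity_pos (hμ : 0 ≤ μ) (S : Finset ι) {z : ι → V} (hz : μ z ≠ 0) :
    0 < marginalDensity μ S z :=
  sum_pos' (fun _ _ ↦ hμ _) ⟨z, mem_univ _, by
    rw [piecewise_same]; exact (hμ z).lt_of_ne' hz⟩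

lemma exists_of_marginalDensity_ne_zero {z : ι → V} (h : marginalDensity μ S z ≠ 0) :
    ∃ w, μ w ≠ 0 ∧ ∀ i ∈ S, w i = z i := by
  obtain ⟨y, -, hy⟩ := exists_ne_zero_of_sum_ne_zero h
  exact ⟨_, hy, fun i hi ↦ by simp [hi]⟩

lemma marginalDensity_congr {z w : ι → V} (h : ∀ i ∈ S, z i = w i) :
    marginalDensity μ S z = marginalDensity μ S w :=
  sum_congr rfl fun _ _ ↦ congrArg μ (S.piecewise_congr h fun _ _ ↦ rfl)

lemma marginalDensity_empty (μ : (ι → V) → ℝ) (z : ι → V) : marginalDensity μ ∅ z = ∑ y, μ y := by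
  simp [marginalDensity]

lemma marginalDensity_univ (μ : (ι → V) → ℝ) (z : ι → V) :
    marginalDensity μ univ z = Fintype.card (ι → V) * μ z := by
  simp [marginalDensity]

lemma marginalDensity_eq_card_mul_expect (μ : (ι → V) → ℝ) (S : Finset ι) (z : ι → V) :
    marginalDensity μ S z = Fintype.card (ι → V) * 𝔼 y, μ (S.piecewise z y) :=
  (Fintype.card_mul_expect _).symm

lemma sum_sum_piecewise (S : Finset ι) (F : (ι → V) → (ι → V) → ℝ) :
    ∑ z, ∑ y, F (S.piecewise z y) (S.piecewise y z) = ∑ z, ∑ y, F z y := by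
  have swap : Function.Involutive fun p : (ι → V) × (ι → V) ↦
      (S.piecewise p.1 p.2, S.piecewise p.2 p.1) := fun p ↦ by
    ext i <;> by_cases h : i ∈ S <;> simp [h]
  rw [← Fintype.sum_prod_type', ← Fintype.sum_prod_type']
  exact Equiv.sum_comp swap.toPerm fun p ↦ F p.1 p.2

lemma expect_marginalDensity_mul [Nonempty V] (μ : (ι → V) → ℝ) {h : (ι → V) → ℝ}
    (hS : ∀ z y, h (S.piecewise z y) = h z) :
    𝔼 z, marginalDensity μ S z * h z = ∑ z, μ z * h z := by
  have expand (z : ι → V) :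
      marginalDensity μ S z * h z = ∑ y, μ (S.piecewise z y) * h (S.piecewise z y) := by
    simp_rw [marginalDensity, sum_mul, hS]
  rw [Fintype.expect_eq_sum_div_card, sum_congr rfl fun z _ ↦ expand z,
    sum_sum_piecewise S fun z _ ↦ μ z * h z]
  simp [← mul_sum]

lemma expect_expect_update [AddCommGroup V] (F : (ι → V) → ℝ) (j : ι) :
    𝔼 y, 𝔼 v, F (Function.update y j v) = 𝔼 y, F y := by
  have update_eq (y : ι → V) : 𝔼 v, F (Function.update y j v) = 𝔼 v, F (y + Pi.single j v) := by
    rw [← expect_add_right (fun v ↦ F (Function.update y j v)) (y j)]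
    refine expect_congr rfl fun v _ ↦ congrArg F ?_
    ext i
    rcases eq_or_ne i j with rfl | hi <;> simp [*, add_comm]
  simp_rw [update_eq]
  rw [expect_comm]
  simp_rw [expect_add_right, Fintype.expect_const]

lemma expect_marginalDensity_insert_update [AddCommGroup V] (μ : (ι → V) → ℝ) {j : ι} (hj : j ∉ S)
    (z : ι → V) :
    𝔼 v, marginalDensity μ (insert j S) (Function.update z j v) = marginalDensity μ S z := by
  have shift (v : V) (y : ι → V) : (insert j S).piecewise (Function.update z j v) y =
      S.piecewise z (Function.update y j v) := by
    ext i
    rcases eq_or_ne i j with rfl | hi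
    · simp [hj]
    · by_cases hS : i ∈ S <;> simp [hi, hS]
  simp only [marginalDensity_eq_card_mul_expect, shift, ← mul_expect]
  rw [expect_comm, expect_expect_update fun y ↦ μ (S.piecewise z y)]

end MarginalDensity

/-! ### Adding random multiples of the other rows to one row -/

section CubeAverages

variable {κ : Type*} [Fintype κ] [DecidableEq κ]

lemma expect_prod_pi {α : Type*} [Fintype α] (f : κ → α → ℝ) :
    𝔼 x : κ → α, ∏ i, f i (x i) = ∏ i, 𝔼 a, f i a := by
  simp only [Fintype.expect_eq_sum_div_card]
  rw [prod_div_distrib, prod_const, prod_univ_sum, Fintype.piFinset_univ, Fintype.card_fun,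
    card_univ, Nat.cast_pow]

lemma expect_zmod_two (F : ZMod 2 → ℝ) : 𝔼 x, F x = (F 0 + F 1) / 2 := by
  rw [Fintype.expect_eq_sum_div_card, ZMod.card, Nat.cast_ofNat]
  exact congrArg (· / 2) (Fin.sum_univ_two F)

lemma expect_ite_forall_eq_zero (A : Finset κ) :
    𝔼 c : κ → ZMod 2, (if ∀ i ∈ A, c i = 0 then (1 : ℝ) else 0) = (1 / 2) ^ #A := by
  have as_prod (c : κ → ZMod 2) : (if ∀ i ∈ A, c i = 0 then (1 : ℝ) else 0) =
      ∏ i, if i ∈ A → c i = 0 then 1 else 0 := by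
    simp [Finset.prod_ite_zero]
  have factor (i : κ) : 𝔼 x : ZMod 2, (if i ∈ A → x = 0 then (1 : ℝ) else 0) =
      if i ∈ A then 1 / 2 else 1 := by
    rw [expect_zmod_two]
    by_cases hi : i ∈ A <;> simp [hi]
  simp_rw [as_prod]
  rw [expect_prod_pi fun i x ↦ if i ∈ A → x = 0 then (1 : ℝ) else 0]
  simp_rw [factor]
  rw [prod_ite_mem]
  simp

lemma expect_eq_half_expect_add (F : (κ → ZMod 2) → ℝ) (j : κ) :
    𝔼 c, F c = 𝔼 c, (F c + F (c + Pi.single j 1)) / 2 := by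
  rw [← expect_div, expect_add_distrib, expect_add_right F]
  ring

end CubeAverages

section RowComb

variable {ι V : Type*} [AddCommGroup V] [Module (ZMod 2) V]

/-- The linear combinations of the rows of `z` in `S`, as a function of the coefficients. -/
def rowComb (S : Finset ι) (z : ι → V) : (ι → ZMod 2) →ₗ[ZMod 2] V :=
  ∑ b ∈ S, (LinearMap.proj b).smulRight (z b)

lemma rowComb_apply (S : Finset ι) (z : ι → V) (c : ι → ZMod 2) :
    rowComb S z c = ∑ b ∈ S, c b • z b := by
  simp [rowComb]

lemma rowComb_congr {S : Finset ι} {z w : ι → V} (h : ∀ i ∈ S, z i = w i) :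
    rowComb S z = rowComb S w :=
  sum_congr rfl fun i hi ↦ by rw [h i hi]

lemma range_rowComb (S : Finset ι) (z : ι → V) :
    LinearMap.range (rowComb S z) = Submodule.span (ZMod 2) (z '' S) := by
  ext v
  simp only [LinearMap.mem_range, rowComb_apply, Submodule.mem_span_image_finset_iff_exists_fun']

lemma rowComb_surjective [Fintype ι] {z : ι → V}
    (hz : Submodule.span (ZMod 2) (Set.range z) = ⊤) :
    Function.Surjective (rowComb univ z) := by
  rw [← LinearMap.range_eq_top, range_rowComb, coe_univ, Set.image_univ, hz]

variable [DecidableEq ι]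

lemma rowComb_eq_of_vanish {S T : Finset ι} (hST : S ⊆ T) (z : ι → V) {c : ι → ZMod 2}
    (hc : ∀ a ∈ T \ S, c a = 0) : rowComb T z c = rowComb S z c := by
  rw [rowComb_apply, rowComb_apply]
  exact (sum_subset hST fun a ha haS ↦ by rw [hc a (mem_sdiff.2 ⟨ha, haS⟩), zero_smul]).symm

lemma rowWord_product_singleton (S : Finset ι) (j : ι) (ε : ι × ι → ZMod 2) (z : ι → V) :
    rowWord (S ×ˢ {j}) ε z = Function.update z j (z j + rowComb S z fun b ↦ ε (b, j)) := by
  ext i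
  rw [rowWord, sum_product, rowComb_apply]
  rcases eq_or_ne i j with rfl | hi
  · simp
  · simp [hi]

lemma rowWord_singleton_product (T : Finset ι) (j : ι) (ε : ι × ι → ZMod 2) (z : ι → V) :
    rowWord ({j} ×ˢ T) ε z = fun i ↦ if i ∈ T then z i + ε (j, i) • z j else z i := by
  ext i
  rw [rowWord, sum_product, sum_singleton]
  by_cases hi : i ∈ T <;> simp [hi, sum_ite_eq']

variable [Fintype ι]

lemma rowComb_univ_eq (z : ι → V) (j : ι) (c : ι → ZMod 2) :
    rowComb univ z c = c j • z j + rowComb {j}ᶜ z c := by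
  rw [rowComb_apply, rowComb_apply, compl_singleton,
    add_sum_erase _ (fun b ↦ c b • z b) (mem_univ j)]

lemma expect_rowWord_product_singleton (S : Finset ι) (j : ι) (g : (ι → V) → ℝ) (z : ι → V) :
    𝔼 ε, g (rowWord (S ×ˢ {j}) ε z) = 𝔼 c, g (Function.update z j (z j + rowComb S z c)) := by
  simp_rw [rowWord_product_singleton]
  exact expect_comp_addMonoidHom
    (LinearMap.funLeft (ZMod 2) (ZMod 2) fun b : ι ↦ (b, j)).toAddMonoidHom
    (fun c ↦ g (Function.update z j (z j + rowComb S z c)))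
    fun c ↦ ⟨fun p ↦ c p.1, fun _ ↦ rfl⟩

lemma expect_rowWord_singleton_product (T : Finset ι) (j : ι) (g : (ι → V) → ℝ) (z : ι → V) :
    𝔼 ε, g (rowWord ({j} ×ˢ T) ε z) =
      𝔼 d : ι → ZMod 2, g fun i ↦ if i ∈ T then z i + d i • z j else z i := by
  simp_rw [rowWord_singleton_product]
  exact expect_comp_addMonoidHom
    (LinearMap.funLeft (ZMod 2) (ZMod 2) fun i : ι ↦ (j, i)).toAddMonoidHom
    (fun d ↦ g fun i ↦ if i ∈ T then z i + d i • z j else z i)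
    fun d ↦ ⟨fun p ↦ d p.2, fun _ ↦ rfl⟩

end RowComb

section RandomRow

variable {ι V : Type*} [Fintype ι] [DecidableEq ι] [AddCommGroup V] [Module (ZMod 2) V]
  {z : ι → V} {S : Finset ι} {j : ι} {b : V → ℝ}

lemma expect_eq_expect_half_rowComb [Fintype V] (hz : Submodule.span (ZMod 2) (Set.range z) = ⊤)
    (j : ι) (b : V → ℝ) :
    𝔼 v, b v = 𝔼 c, (b (z j + rowComb {j}ᶜ z c) + b (rowComb {j}ᶜ z c)) / 2 := by
  have surj := expect_comp_addMonoidHom (rowComb univ z).toAddMonoidHom b fun y ↦ by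
    obtain ⟨c, rfl⟩ := rowComb_surjective hz y
    exact ⟨c, fun _ ↦ rfl⟩
  rw [← surj, expect_eq_half_expect_add _ j]
  refine expect_congr rfl fun c _ ↦ ?_
  have hflip : rowComb {j}ᶜ z (c + Pi.single j 1) = rowComb {j}ᶜ z c := by
    rw [rowComb_apply, rowComb_apply]
    refine sum_congr rfl fun a ha ↦ ?_
    rw [Pi.add_apply, Pi.single_eq_of_ne (by simpa using ha), add_zero]
  simp only [LinearMap.toAddMonoidHom_coe, rowComb_univ_eq z j, hflip, Pi.add_apply,
    Pi.single_eq_same]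
  obtain h | h : c j = 0 ∨ c j = 1 := by generalize c j = x; revert x; decide
  · simp [h, add_comm]
  · simp [h, CharTwo.add_self_eq_zero]

lemma expect_ite_vanish_eq (hj : j ∉ S) :
    𝔼 c : ι → ZMod 2, (if ∀ a ∈ (insert j S)ᶜ, c a = 0 then (1 : ℝ) else 0) =
      2 * (1 / 2) ^ #Sᶜ := by
  have hcard : #Sᶜ = #(insert j S)ᶜ + 1 := by
    rw [compl_insert, card_erase_add_one (mem_compl.2 hj)]
  rw [expect_ite_forall_eq_zero, hcard, pow_succ]
  ring

lemma rowComb_compl_singleton_of_vanish (hj : j ∉ S) {c : ι → ZMod 2}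
    (hc : ∀ a ∈ (insert j S)ᶜ, c a = 0) : rowComb {j}ᶜ z c = rowComb S z c := by
  refine rowComb_eq_of_vanish (fun i hi ↦ ?_) z fun a ha ↦ hc a ?_
  · simpa using ne_of_mem_of_not_mem hi hj
  · simpa using ha

lemma half_pow_mul_le_expect [Fintype V] (hz : Submodule.span (ZMod 2) (Set.range z) = ⊤)
    (hj : j ∉ S) (hb : 0 ≤ b) (hinv : ∀ v c, b (v + rowComb S z c) = b v) :
    (1 / 2) ^ #Sᶜ * b (z j) ≤ 𝔼 v, b v := by
  rw [expect_eq_expect_half_rowComb hz j b,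
    show (1 / 2 : ℝ) ^ #Sᶜ * b (z j) = 2 * (1 / 2) ^ #Sᶜ * (b (z j) / 2) by ring,
    ← expect_ite_vanish_eq hj, expect_mul]
  refine expect_le_expect fun c _ ↦ ?_
  have h₁ := hb (z j + rowComb {j}ᶜ z c)
  have h₂ := hb (rowComb {j}ᶜ z c)
  simp only [Pi.zero_apply] at h₁ h₂
  split_ifs with h
  · rw [rowComb_compl_singleton_of_vanish hj h, hinv] at *
    linarith
  · linarith

lemma expect_sum_mul_of_ne_zero {T : Finset ι} {c : ι → ZMod 2} {a : ι} (ha : a ∈ T)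
    (hca : c a ≠ 0) (F : ZMod 2 → ℝ) :
    𝔼 d : ι → ZMod 2, F (∑ i ∈ T, d i * c i) = (F 0 + F 1) / 2 := by
  rw [← expect_zmod_two]
  have hc1 : c a = 1 := by revert hca; generalize c a = x; revert x; decide
  have surj (y : ZMod 2) : rowComb T c (Pi.single a y) = y := by
    simp [rowComb_apply, Pi.single_apply, ha, hc1]
  have h := expect_comp_addMonoidHom (rowComb T c).toAddMonoidHom F fun y ↦
    ⟨Pi.single a y, fun x ↦ by rw [LinearMap.toAddMonoidHom_coe, surj]⟩
  simpa only [LinearMap.toAddMonoidHom_coe, rowComb_apply, smul_eq_mul] using h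

/- Unless `c` vanishes off `insert j S`, the coefficient of the extra multiple of `z j` is a fair
bit; a vanishing `c` only moves `z j` inside its coset. -/
lemma expect_expect_le_add_half_pow_mul [Fintype V]
    (hz : Submodule.span (ZMod 2) (Set.range z) = ⊤) (hj : j ∉ S) (hb : 0 ≤ b)
    (hinv : ∀ v c, b (v + rowComb S z c) = b v) :
    𝔼 d : ι → ZMod 2, 𝔼 c : ι → ZMod 2,
      b (z j + rowComb {j}ᶜ z c + (∑ a ∈ (insert j S)ᶜ, d a * c a) • z j) ≤
        (𝔼 v, b v) + (1 / 2) ^ #Sᶜ * b (z j) := by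
  rw [expect_comm, expect_eq_expect_half_rowComb hz j b,
    show (1 / 2 : ℝ) ^ #Sᶜ * b (z j) = 2 * (1 / 2) ^ #Sᶜ * (b (z j) / 2) by ring,
    ← expect_ite_vanish_eq hj, expect_mul, ← expect_add_distrib]
  refine expect_le_expect fun c _ ↦ ?_
  split_ifs with h
  · have no_multiple (d : ι → ZMod 2) : ∑ a ∈ (insert j S)ᶜ, d a * c a = 0 :=
      sum_eq_zero fun a ha ↦ by rw [h a ha, mul_zero]
    have h₀ : 0 ≤ b (rowComb S z c) := hb _
    simp only [no_multiple, zero_smul, add_zero, Fintype.expect_const,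
      rowComb_compl_singleton_of_vanish hj h, hinv]
    linarith
  · push Not at h
    obtain ⟨a, ha, hca⟩ := h
    rw [expect_sum_mul_of_ne_zero ha hca fun s ↦ b (z j + rowComb {j}ᶜ z c + s • z j)]
    have cancel : z j + rowComb {j}ᶜ z c + z j = rowComb {j}ᶜ z c := by
      rw [add_right_comm, ZModModule.add_self, zero_add]
    rw [zero_smul, add_zero, one_smul, cancel]
    linarith

end RandomRow

/-! ### One stage of the entropy inequality -/

section PointwiseLog

lemma le_of_sub_mul_deriv_nonneg {f f' : ℝ → ℝ} {a b : ℝ}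
    (hf : ∀ x ∈ Set.uIcc a b, HasDerivAt f (f' x) x)
    (hf' : ∀ x ∈ Set.uIcc a b, 0 ≤ (x - a) * f' x) : f a ≤ f b := by
  rcases lt_trichotomy a b with hab | rfl | hba
  · rw [Set.uIcc_of_le hab.le] at hf hf'
    obtain ⟨c, hc, hslope⟩ := exists_hasDerivAt_eq_slope f f' hab
      (fun x hx ↦ (hf x hx).continuousAt.continuousWithinAt)
      fun x hx ↦ hf x (Set.Ioo_subset_Icc_self hx)
    have h := nonneg_of_mul_nonneg_right (hf' c (Set.Ioo_subset_Icc_self hc)) (sub_pos.2 hc.1)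
    rw [hslope, le_div_iff₀ (sub_pos.2 hab)] at h
    linarith
  · rfl
  · rw [Set.uIcc_of_ge hba.le] at hf hf'
    obtain ⟨c, hc, hslope⟩ := exists_hasDerivAt_eq_slope f f' hba
      (fun x hx ↦ (hf x hx).continuousAt.continuousWithinAt)
      fun x hx ↦ hf x (Set.Ioo_subset_Icc_self hx)
    have h := nonpos_of_mul_nonneg_right (hf' c (Set.Ioo_subset_Icc_self hc)) (sub_neg.2 hc.2)
    rw [hslope, div_le_iff₀ (sub_pos.2 hba)] at h
    linarith

variable {η : ℝ}

lemma log_convexComb_one_le (hη : 0 < η) (hη2 : η ≤ 1 / 2) {R : ℝ} (hR : 0 < R)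
    (hηR : η * R ≤ 1 - η) :
    Real.log (1 - η + η * R) ≤ 3 / 4 * Real.log R + (3 / 4 - η) * (R⁻¹ - 1) := by
  let f : ℝ → ℝ := fun x ↦
    3 / 4 * Real.log x + (3 / 4 - η) * (x⁻¹ - 1) - Real.log (1 - η + η * x)
  let f' : ℝ → ℝ := fun x ↦ 3 / 4 * x⁻¹ + (3 / 4 - η) * (-(x ^ 2)⁻¹) - η / (1 - η + η * x)
  have bounds {x : ℝ} (hx : x ∈ Set.uIcc 1 R) : 0 < x ∧ η * x ≤ 1 - η := by
    rcases Set.mem_uIcc.1 hx with ⟨h₁, h₂⟩ | ⟨h₁, h₂⟩ <;> constructor <;> nlinarith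
  have hderiv {x : ℝ} (hx : x ∈ Set.uIcc 1 R) : HasDerivAt f (f' x) x := by
    have hx0 := (bounds hx).1
    have hs : 0 < 1 - η + η * x := by nlinarith
    have affine : HasDerivAt (fun x ↦ 1 - η + η * x) η x := by
      simpa using ((hasDerivAt_id x).const_mul η).const_add (1 - η)
    exact (((Real.hasDerivAt_log hx0.ne').const_mul _).add
      (((hasDerivAt_inv hx0.ne').sub_const 1).const_mul _)).sub (affine.log hs.ne')
  have hsign {x : ℝ} (hx : x ∈ Set.uIcc 1 R) : 0 ≤ (x - 1) * f' x := by
    obtain ⟨hx0, hηx⟩ := bounds hx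
    have hs : 0 < 1 - η + η * x := by nlinarith
    have factor : (x - 1) * f' x = (x - 1) ^ 2 * (3 / 4 - 7 / 4 * η + η ^ 2 - 1 / 4 * (η * x)) /
        (x ^ 2 * (1 - η + η * x)) := by
      simp only [f']
      obtain ⟨s, hs_eq⟩ : ∃ s, s = 1 - η + η * x := ⟨_, rfl⟩
      rw [← hs_eq] at hs ⊢
      field_simp
      rw [hs_eq]
      ring
    rw [factor]
    exact div_nonneg (mul_nonneg (sq_nonneg _) (by nlinarith)) (by positivity)
  have h : f 1 ≤ f R := le_of_sub_mul_deriv_nonneg (fun x hx ↦ hderiv hx) fun x hx ↦ hsign hx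
  have hf1 : f 1 = 0 := by simp [f]
  simp only [hf1, f] at h
  linarith

lemma log_add_mul_le (hη : 0 < η) (hη2 : η ≤ 1 / 2) {A B : ℝ} (hA : 0 < A) (hB : 0 < B)
    (hBA : η * B ≤ A) :
    Real.log (A + η * B) ≤ 1 / 4 * (Real.log A - Real.log (1 - η)) + 3 / 4 * Real.log B +
      (3 / 4 - η) * ((1 - η)⁻¹ * (A / B) - 1) := by
  have h1η : 0 < 1 - η := by linarith
  set R := (1 - η) * B / A with hR
  have hR0 : 0 < R := by positivity
  have hηR : η * R ≤ 1 - η := by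
    rw [hR, ← mul_div_assoc, div_le_iff₀ hA]
    nlinarith
  have scale : A + η * B = A / (1 - η) * (1 - η + η * R) := by
    rw [hR]
    field_simp
  have inv_R : R⁻¹ = (1 - η)⁻¹ * (A / B) := by
    rw [hR]
    field_simp
  have log_R : Real.log R = Real.log (1 - η) + Real.log B - Real.log A := by
    rw [hR, Real.log_div (by positivity) hA.ne', Real.log_mul h1η.ne' hB.ne']
  have h := log_convexComb_one_le hη hη2 hR0 hηR
  rw [log_R, inv_R] at h
  rw [scale, Real.log_mul (by positivity) (by positivity), Real.log_div hA.ne' h1η.ne']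
  linarith

end PointwiseLog

section CosetDensity

variable {ι V : Type*} [Fintype ι] [DecidableEq ι] [AddCommGroup V] [Module (ZMod 2) V] [Fintype V]

/-- The density of row `j` at `v`, averaged over the coset of `v` modulo the span of the rows in
`S`, jointly with the density of the rows in `S` at `z`. -/
def cosetDensity (μ : (ι → V) → ℝ) (S : Finset ι) (j : ι) (z : ι → V) (v : V) : ℝ :=
  𝔼 c, marginalDensity μ (insert j S) (Function.update z j (v + rowComb S z c))

variable {μ : (ι → V) → ℝ} {S : Finset ι} {j : ι}

lemma cosetDensity_nonneg (hμ : 0 ≤ μ) (S : Finset ι) (j : ι) (z : ι → V) :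
    0 ≤ cosetDensity μ S j z := fun _ ↦ expect_nonneg fun _ _ ↦ marginalDensity_nonneg hμ _ _

lemma cosetDensity_pos (hμ : 0 ≤ μ) (S : Finset ι) (j : ι) {z : ι → V} (hz : μ z ≠ 0) :
    0 < cosetDensity μ S j z (z j) :=
  expect_pos' (fun _ _ ↦ marginalDensity_nonneg hμ _ _) ⟨0, mem_univ _, by
    rw [map_zero, add_zero, Function.update_eq_self]; exact marginalDensity_pos hμ _ hz⟩

lemma cosetDensity_congr {z w : ι → V} (h : ∀ i ∈ S, z i = w i) :
    cosetDensity μ S j z = cosetDensity μ S j w := by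
  ext v
  refine expect_congr rfl fun c _ ↦ ?_
  rw [rowComb_congr h]
  refine marginalDensity_congr fun i hi ↦ ?_
  rcases eq_or_ne i j with rfl | hij
  · simp
  · simpa [hij] using h i (mem_of_mem_insert_of_ne hi hij)

lemma cosetDensity_add_rowComb (z : ι → V) (v : V) (c : ι → ZMod 2) :
    cosetDensity μ S j z (v + rowComb S z c) = cosetDensity μ S j z v := by
  have h := expect_add_right
    (fun d ↦ marginalDensity μ (insert j S) (Function.update z j (v + rowComb S z d))) c
  simpa only [cosetDensity, map_add, add_assoc, add_comm (rowComb S z c)] using h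

lemma expect_cosetDensity (hj : j ∉ S) (z : ι → V) :
    𝔼 v, cosetDensity μ S j z v = marginalDensity μ S z := by
  simp_rw [cosetDensity]
  rw [expect_comm]
  simp_rw [expect_add_right fun v ↦ marginalDensity μ (insert j S) (Function.update z j v),
    expect_marginalDensity_insert_update μ hj, Fintype.expect_const]

lemma notMem_span_of_cosetDensity_ne_zero (hsupp : ∀ z, μ z ≠ 0 → LinearIndependent (ZMod 2) z)
    (hj : j ∉ S) {z : ι → V} {v : V} (h : cosetDensity μ S j z v ≠ 0) :
    v ∉ Submodule.span (ZMod 2) (z '' S) := fun hv ↦ by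
  obtain ⟨c, -, hc⟩ := exists_ne_zero_of_expect_ne_zero h
  obtain ⟨w, hw, hwz⟩ := exists_of_marginalDensity_ne_zero hc
  have hwS : Set.EqOn w z S := fun i hi ↦ by
    rw [hwz i (mem_insert_of_mem hi), Function.update_of_ne (ne_of_mem_of_not_mem hi hj)]
  have hwj : w j = v + rowComb S z c := by simpa using hwz j (mem_insert_self j S)
  have hnotMem := (hsupp w hw).notMem_span_image (s := (S : Set ι)) (x := j) (by simpa using hj)
  rw [hwS.image_eq, hwj] at hnotMem
  exact hnotMem (add_mem hv (range_rowComb S z ▸ LinearMap.mem_range_self _ c))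

lemma expect_marginalDensity_insert_mul (hj : j ∉ S) {q : (ι → V) → ℝ}
    (hq : ∀ z c, q (Function.update z j (z j + rowComb S z c)) = q z) :
    𝔼 z, marginalDensity μ (insert j S) z * q z = 𝔼 z, cosetDensity μ S j z (z j) * q z := by
  have shear (c : ι → ZMod 2) : 𝔼 z, marginalDensity μ (insert j S) z * q z =
      𝔼 z, marginalDensity μ (insert j S) (Function.update z j (z j + rowComb S z c)) * q z := by
    have involutive : Function.Involutive fun z : ι → V ↦
        Function.update z j (z j + rowComb S z c) := fun z ↦ by
      have unchanged : ∀ i ∈ S, Function.update z j (z j + rowComb S z c) i = z i := fun i hi ↦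
        Function.update_of_ne (ne_of_mem_of_not_mem hi hj) _ _
      simp [rowComb_congr unchanged, add_assoc, ZModModule.add_self]
    refine (Fintype.expect_equiv involutive.toPerm _ _ fun z ↦ ?_).symm
    rw [Function.Involutive.coe_toPerm, hq]
  rw [← Fintype.expect_const (ι := ι → ZMod 2) (𝔼 z, marginalDensity μ (insert j S) z * q z),
    expect_congr rfl fun c _ ↦ shear c, expect_comm]
  simp_rw [cosetDensity, expect_mul]

end CosetDensity

section RatioBound

open scoped Classical in
lemma expect_ite_notMem_submodule {V : Type*} [AddCommGroup V] [Module (ZMod 2) V] [Fintype V]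
    (U : Submodule (ZMod 2) V) :
    𝔼 v, (if v ∉ U then (1 : ℝ) else 0) =
      1 - (1 / 2) ^ (Module.finrank (ZMod 2) V - Module.finrank (ZMod 2) U) := by
  have flip (v : V) : (if v ∉ U then (1 : ℝ) else 0) = 1 - if v ∈ U then 1 else 0 := by
    by_cases hv : v ∈ U <;> simp [hv]
  have hcard : (#(univ.filter (· ∈ U)) : ℝ) = 2 ^ Module.finrank (ZMod 2) U := by
    rw [← Fintype.card_subtype, Module.card_eq_pow_finrank (K := ZMod 2) (V := U), ZMod.card]
    norm_cast
  simp_rw [flip]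
  rw [expect_sub_distrib, Fintype.expect_const, Fintype.expect_eq_sum_div_card, sum_boole, hcard,
    Module.card_eq_pow_finrank (K := ZMod 2) (V := V), ZMod.card, Nat.cast_pow, Nat.cast_ofNat,
    one_div, inv_pow, pow_sub₀ _ two_ne_zero U.finrank_le]
  simp [div_eq_mul_inv]

variable {ι V : Type*} [Fintype ι] [DecidableEq ι] [AddCommGroup V] [Module (ZMod 2) V] [Fintype V]
  {μ : (ι → V) → ℝ} {S : Finset ι} {j : ι}

open scoped Classical in
lemma expect_notMem_span_mul_marginalDensity
    (hsupp : ∀ z, μ z ≠ 0 → LinearIndependent (ZMod 2) z)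
    (hV : Module.finrank (ZMod 2) V = Fintype.card ι) (hj : j ∉ S) (z : ι → V) :
    𝔼 v, (if v ∉ Submodule.span (ZMod 2) (Function.update z j v '' S) then (1 : ℝ) else 0) *
      marginalDensity μ S (Function.update z j v) =
        marginalDensity μ S z * (1 - (1 / 2) ^ #Sᶜ) := by
  have unchanged (v : V) : Set.EqOn (Function.update z j v) z S := fun i hi ↦
    Function.update_of_ne (ne_of_mem_of_not_mem hi hj) _ _
  simp only [(unchanged _).image_eq, marginalDensity_congr (unchanged _)]
  rw [← expect_mul, expect_ite_notMem_submodule, mul_comm]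
  by_cases h : marginalDensity μ S z = 0
  · rw [h, zero_mul, zero_mul]
  · obtain ⟨w, hw, hwz⟩ := exists_of_marginalDensity_ne_zero h
    have hfinrank := finrank_span_eq_card ((hsupp w hw).comp (Subtype.val : S → ι)
      Subtype.val_injective)
    have hrange : Set.range (w ∘ (Subtype.val : S → ι)) = z '' S := by
      rw [Set.range_comp, Subtype.range_coe]
      exact Set.image_congr hwz
    rw [hrange, Fintype.card_coe] at hfinrank
    rw [hfinrank, hV, card_compl]

lemma sum_mul_marginalDensity_div_cosetDensity_le (hμ : μ ∈ stdSimplex ℝ (ι → V))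
    (hsupp : ∀ z, μ z ≠ 0 → LinearIndependent (ZMod 2) z)
    (hV : Module.finrank (ZMod 2) V = Fintype.card ι) (hj : j ∉ S) :
    ∑ z, μ z * (marginalDensity μ S z / cosetDensity μ S j z (z j)) ≤ 1 - (1 / 2) ^ #Sᶜ := by
  classical
  let q : (ι → V) → ℝ := fun z ↦ marginalDensity μ S z / cosetDensity μ S j z (z j)
  have hq_local (z y : ι → V) : q ((insert j S).piecewise z y) = q z := by
    have h : ∀ i ∈ S, (insert j S).piecewise z y i = z i := fun i hi ↦ by simp [hi]
    simp only [q, marginalDensity_congr h, cosetDensity_congr h, piecewise_insert_self]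
  have hq_coset (z : ι → V) (c : ι → ZMod 2) :
      q (Function.update z j (z j + rowComb S z c)) = q z := by
    have h : ∀ i ∈ S, Function.update z j (z j + rowComb S z c) i = z i := fun i hi ↦
      Function.update_of_ne (ne_of_mem_of_not_mem hi hj) _ _
    simp only [q, marginalDensity_congr h, cosetDensity_congr h, Function.update_self,
      cosetDensity_add_rowComb]
  calc ∑ z, μ z * q z = 𝔼 z, cosetDensity μ S j z (z j) * q z := by
        rw [← expect_marginalDensity_mul μ hq_local, expect_marginalDensity_insert_mul hj hq_coset]
    _ ≤ 𝔼 z, (if z j ∉ Submodule.span (ZMod 2) (z '' S) then (1 : ℝ) else 0) *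
          marginalDensity μ S z := by
        refine expect_le_expect fun z _ ↦ ?_
        by_cases h : cosetDensity μ S j z (z j) = 0
        · rw [h, zero_mul]
          exact mul_nonneg (by positivity) (marginalDensity_nonneg hμ.1 S z)
        · rw [if_pos (notMem_span_of_cosetDensity_ne_zero hsupp hj h), one_mul,
            mul_div_cancel₀ _ h]
    _ = 𝔼 z, marginalDensity μ S z * (1 - (1 / 2) ^ #Sᶜ) := by
        rw [← expect_expect_update _ j]
        simp only [Function.update_self, expect_notMem_span_mul_marginalDensity hsupp hV hj]
    _ = 1 - (1 / 2) ^ #Sᶜ := by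
        rw [expect_marginalDensity_mul μ fun _ _ ↦ rfl, ← sum_mul, hμ.2, one_mul]

end RatioBound

section Stage

variable {ι V : Type*} [Fintype ι] [DecidableEq ι] [AddCommGroup V] [Module (ZMod 2) V] [Fintype V]
  {μ : (ι → V) → ℝ} {S : Finset ι} {j : ι}

lemma expect_expect_cosetDensity_le (hμ : 0 ≤ μ) (hj : j ∉ S) {z : ι → V}
    (hz : Submodule.span (ZMod 2) (Set.range z) = ⊤) :
    𝔼 δ, 𝔼 ε, cosetDensity μ S j
        (rowWord ({j}ᶜ ×ˢ {j}) ε (rowWord ({j} ×ˢ (insert j S)ᶜ) δ z))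
        (rowWord ({j}ᶜ ×ˢ {j}) ε (rowWord ({j} ×ˢ (insert j S)ᶜ) δ z) j) ≤
      marginalDensity μ S z + (1 / 2) ^ #Sᶜ * cosetDensity μ S j z (z j) := by
  have spread (d c : ι → ZMod 2) :
      rowComb {j}ᶜ (fun i ↦ if i ∈ (insert j S)ᶜ then z i + d i • z j else z i) c =
        rowComb {j}ᶜ z c + (∑ a ∈ (insert j S)ᶜ, d a * c a) • z j := by
    have term (a : ι) : c a • (if a ∈ (insert j S)ᶜ then z a + d a • z j else z a) =
        c a • z a + if a ∈ (insert j S)ᶜ then (d a * c a) • z j else 0 := by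
      split_ifs
      · rw [smul_add, smul_smul, mul_comm]
      · rw [add_zero]
    have hsub : (insert j S)ᶜ ⊆ {j}ᶜ := compl_subset_compl.2 (by simp)
    rw [rowComb_apply, rowComb_apply, sum_congr rfl fun a _ ↦ term a, sum_add_distrib,
      sum_ite_mem, inter_eq_right.2 hsub, sum_smul]
  have unchanged (d : ι → ZMod 2) (v : V) : ∀ i ∈ S, Function.update
      (fun i ↦ if i ∈ (insert j S)ᶜ then z i + d i • z j else z i) j v i = z i := fun i hi ↦ by
    rw [Function.update_of_ne (ne_of_mem_of_not_mem hi hj)]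
    simp [hi]
  have hword (y : ι → V) : 𝔼 ε, cosetDensity μ S j (rowWord ({j}ᶜ ×ˢ {j}) ε y)
      (rowWord ({j}ᶜ ×ˢ {j}) ε y j) = _ :=
    expect_rowWord_product_singleton {j}ᶜ j (fun w ↦ cosetDensity μ S j w (w j)) y
  simp only [hword, Function.update_self]
  rw [expect_rowWord_singleton_product _ j fun y ↦ 𝔼 c, cosetDensity μ S j
    (Function.update y j (y j + rowComb {j}ᶜ y c)) (y j + rowComb {j}ᶜ y c)]
  simp only [spread, cosetDensity_congr (unchanged _ _), ← add_assoc]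
  have h := expect_expect_le_add_half_pow_mul hz hj (cosetDensity_nonneg hμ S j z)
    (cosetDensity_add_rowComb z)
  rw [expect_cosetDensity hj] at h
  simpa only [mem_compl, mem_insert_self, not_true_eq_false, if_false] using h

lemma sum_mul_log_marginalDensity_insert_le (hμ : 0 ≤ μ) (hj : j ∉ S) :
    ∑ z, μ z * Real.log (marginalDensity μ (insert j S) z) ≤ rowProduction (S ×ˢ {j}) μ +
      ∑ z, μ z * Real.log (cosetDensity μ S j z (z j)) := by
  have h := sum_mul_log_le_rowProduction_add (Γ := univ)
    (fst_ne_snd_of_mem_product (disjoint_singleton_right.2 hj)) (by simp) hμ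
    (marginalDensity_nonneg hμ (insert j S)) fun z _ hz ↦ marginalDensity_pos hμ _ hz
  simpa only [cosetDensity, expect_rowWord_product_singleton] using h

lemma sum_mul_log_cosetDensity_le (hμ : 0 ≤ μ) (hj : j ∉ S)
    (hsupp : ∀ z, μ z ≠ 0 → Submodule.span (ZMod 2) (Set.range z) = ⊤) :
    ∑ z, μ z * Real.log (cosetDensity μ S j z (z j)) ≤
      rowProduction ({j}ᶜ ×ˢ {j}) μ + rowProduction ({j} ×ˢ (insert j S)ᶜ) μ +
        ∑ z, μ z * Real.log
          (marginalDensity μ S z + (1 / 2) ^ #Sᶜ * cosetDensity μ S j z (z j)) := by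
  let g : (ι → V) → ℝ := fun z ↦ cosetDensity μ S j z (z j)
  let g' : (ι → V) → ℝ := fun z ↦ 𝔼 ε, g (rowWord ({j}ᶜ ×ˢ {j}) ε z)
  have hg : 0 ≤ g := fun z ↦ cosetDensity_nonneg hμ S j z (z j)
  have hg' : 0 ≤ g' := fun z ↦ expect_nonneg fun ε _ ↦ hg _
  have hg'_pos {z : ι → V} (hz : μ z ≠ 0) : 0 < g' z :=
    expect_pos' (fun ε _ ↦ hg _) ⟨0, mem_univ _, by
      rw [rowWord_zero]; exact cosetDensity_pos hμ S j hz⟩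
  have into_j := sum_mul_log_le_rowProduction_add (Γ := univ)
    (fst_ne_snd_of_mem_product (S := {j}ᶜ) (T := {j}) (by simp)) (by simp) hμ hg
    fun z _ hz ↦ cosetDensity_pos hμ S j hz
  have from_j := sum_mul_log_le_rowProduction_add (Γ := univ)
    (fst_ne_snd_of_mem_product (S := {j}) (T := (insert j S)ᶜ) (by simp)) (by simp) hμ hg'
    fun z _ hz ↦ hg'_pos hz
  have average : ∑ z, μ z * Real.log (𝔼 δ, g' (rowWord ({j} ×ˢ (insert j S)ᶜ) δ z)) ≤
      ∑ z, μ z * Real.log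
        (marginalDensity μ S z + (1 / 2) ^ #Sᶜ * cosetDensity μ S j z (z j)) := by
    refine sum_le_sum fun z _ ↦ ?_
    by_cases hz : μ z = 0
    · rw [hz, zero_mul, zero_mul]
    · refine mul_le_mul_of_nonneg_left (Real.log_le_log ?_ ?_) (hμ z)
      · exact expect_pos' (fun δ _ ↦ hg' _) ⟨0, mem_univ _, by
          rw [rowWord_zero]; exact hg'_pos hz⟩
      · exact expect_expect_cosetDensity_le hμ hj (hsupp z hz)
  linarith

lemma sum_mul_log_marginalDensity_add_le (hμ : μ ∈ stdSimplex ℝ (ι → V))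
    (hsupp : ∀ z, μ z ≠ 0 → LinearIndependent (ZMod 2) z)
    (hV : Module.finrank (ZMod 2) V = Fintype.card ι) (hj : j ∉ S) :
    ∑ z, μ z * Real.log (marginalDensity μ S z + (1 / 2) ^ #Sᶜ * cosetDensity μ S j z (z j)) ≤
      1 / 4 * (∑ z, μ z * Real.log (marginalDensity μ S z) - Real.log (1 - (1 / 2) ^ #Sᶜ)) +
        3 / 4 * ∑ z, μ z * Real.log (cosetDensity μ S j z (z j)) := by
  have ratio := sum_mul_marginalDensity_div_cosetDensity_le hμ hsupp hV hj
  have hη : (1 / 2 : ℝ) ^ #Sᶜ ≤ 1 / 2 :=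
    pow_le_of_le_one (by norm_num) (by norm_num) (card_ne_zero_of_mem (mem_compl.2 hj))
  set η : ℝ := (1 / 2) ^ #Sᶜ
  have hη0 : 0 < η := by positivity
  have pointwise (z : ι → V) :
      μ z * Real.log (marginalDensity μ S z + η * cosetDensity μ S j z (z j)) ≤
        1 / 4 * (μ z * Real.log (marginalDensity μ S z) - μ z * Real.log (1 - η)) +
        3 / 4 * (μ z * Real.log (cosetDensity μ S j z (z j))) + (3 / 4 - η) * ((1 - η)⁻¹ *
          (μ z * (marginalDensity μ S z / cosetDensity μ S j z (z j))) - μ z) := by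
    by_cases hz : μ z = 0
    · simp [hz]
    have hspan := (hsupp z hz).span_eq_top_of_card_eq_finrank' hV.symm
    have coset_le := half_pow_mul_le_expect hspan hj (cosetDensity_nonneg hμ.1 S j z)
      (cosetDensity_add_rowComb z)
    rw [expect_cosetDensity hj] at coset_le
    have h := mul_le_mul_of_nonneg_left (log_add_mul_le hη0 hη (marginalDensity_pos hμ.1 S hz)
      (cosetDensity_pos hμ.1 S j hz) coset_le) (hμ.1 z)
    exact h.trans_eq (by ring)
  have h := sum_le_sum fun z (_ : z ∈ univ) ↦ pointwise z
  simp only [sum_add_distrib, sum_sub_distrib, ← mul_sum, ← sum_mul, hμ.2, one_mul] at h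
  have hratio : (1 - η)⁻¹ *
      ∑ z, μ z * (marginalDensity μ S z / cosetDensity μ S j z (z j)) ≤ 1 := by
    rw [inv_mul_le_iff₀ (by linarith)]
    linarith
  nlinarith

lemma sum_mul_log_marginalDensity_insert_le_add (hμ : μ ∈ stdSimplex ℝ (ι → V))
    (hsupp : ∀ z, μ z ≠ 0 → LinearIndependent (ZMod 2) z)
    (hV : Module.finrank (ZMod 2) V = Fintype.card ι) (hj : j ∉ S) :
    ∑ z, μ z * Real.log (marginalDensity μ (insert j S) z) ≤ rowProduction (S ×ˢ {j}) μ +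
      4 * (rowProduction ({j}ᶜ ×ˢ {j}) μ + rowProduction ({j} ×ˢ (insert j S)ᶜ) μ) +
      ∑ z, μ z * Real.log (marginalDensity μ S z) - Real.log (1 - (1 / 2) ^ #Sᶜ) := by
  have to_coset := sum_mul_log_marginalDensity_insert_le hμ.1 hj
  have coset_le := sum_mul_log_cosetDensity_le hμ.1 hj fun z hz ↦
    (hsupp z hz).span_eq_top_of_card_eq_finrank' hV.symm
  have concave := sum_mul_log_marginalDensity_add_le hμ hsupp hV hj
  linarith

end Stage

/-! ### The square walk -/

section EntropyInequality

lemma sum_rowProduction_le {ι V κ : Type*} [Fintype ι] [DecidableEq ι] [AddCommGroup V] [Fintype V]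
    [Fintype κ] {μ : (ι → V) → ℝ} (hμ : 0 ≤ μ) {A : κ → Finset (ι × ι)}
    (hoff : ∀ j, A j ⊆ univ.offDiag) (hdisj : Pairwise (Function.onFun Disjoint A)) :
    ∑ j, rowProduction (A j) μ ≤ rowProduction univ.offDiag μ := by
  simp only [rowProduction]
  rw [← sum_biUnion fun i _ j _ hij ↦ hdisj hij]
  exact rowProduction_mono (biUnion_subset.2 fun j _ ↦ hoff j) hμ

variable {n : ℕ} {V : Type*} [AddCommGroup V] [Fintype V] {μ : (Fin n → V) → ℝ}

lemma sum_rowProduction_product_singleton_le (hμ : 0 ≤ μ) {S : Fin n → Finset (Fin n)}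
    (hS : ∀ j, j ∉ S j) : ∑ j, rowProduction (S j ×ˢ {j}) μ ≤ rowProduction univ.offDiag μ := by
  refine sum_rowProduction_le hμ (fun j p hp ↦ ?_) fun i j hij ↦ disjoint_left.2 fun p hp hq ↦ ?_
  · rw [mem_product, mem_singleton] at hp
    simpa [hp.2] using ne_of_mem_of_not_mem hp.1 (hS j)
  · rw [mem_product, mem_singleton] at hp hq
    exact hij (hp.2.symm.trans hq.2)

lemma sum_rowProduction_singleton_product_le (hμ : 0 ≤ μ) {S : Fin n → Finset (Fin n)}
    (hS : ∀ j, j ∉ S j) : ∑ j, rowProduction ({j} ×ˢ S j) μ ≤ rowProduction univ.offDiag μ := by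
  refine sum_rowProduction_le hμ (fun j p hp ↦ ?_) fun i j hij ↦ disjoint_left.2 fun p hp hq ↦ ?_
  · rw [mem_product, mem_singleton] at hp
    simpa [hp.1] using (ne_of_mem_of_not_mem hp.2 (hS j)).symm
  · rw [mem_product, mem_singleton] at hp hq
    exact hij (hp.1.symm.trans hq.1)

lemma sum_mul_log_card_mul {X : Type*} [Fintype X] {μ : X → ℝ} (hμ : ∑ x, μ x = 1) {N : ℝ}
    (hN : N ≠ 0) : ∑ x, μ x * Real.log (N * μ x) = negEntropy μ + Real.log N := by
  have term (x : X) : μ x * Real.log (N * μ x) = μ x * Real.log (μ x) + μ x * Real.log N := by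
    by_cases hx : μ x = 0
    · simp [hx]
    · rw [Real.log_mul hN hx]
      ring
  rw [sum_congr rfl fun x _ ↦ term x, sum_add_distrib, ← sum_mul, hμ, one_mul, negEntropy]

variable [Module (ZMod 2) V]

/- Reveal the rows one after the other: by the chain rule the stage inequalities telescope, and each
row operation is used by at most one stage of each of the three kinds. -/
lemma negEntropy_add_sum_log_le (hμ : μ ∈ stdSimplex ℝ (Fin n → V))
    (hsupp : ∀ z, μ z ≠ 0 → LinearIndependent (ZMod 2) z) (hV : Module.finrank (ZMod 2) V = n) :
    negEntropy μ + Real.log (Fintype.card (Fin n → V)) +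
      ∑ j : Fin n, Real.log (1 - (1 / 2) ^ (n - (j : ℕ))) ≤ 9 * rowProduction univ.offDiag μ := by
  let L (m : ℕ) : Finset (Fin n) := univ.filter fun i ↦ (i : ℕ) < m
  let T (m : ℕ) : ℝ := ∑ z, μ z * Real.log (marginalDensity μ (L m) z)
  have hL (j : Fin n) : j ∉ L j := by simp [L]
  have stage (j : Fin n) : T (j + 1) - T j ≤ rowProduction (L j ×ˢ {j}) μ +
      4 * (rowProduction ({j}ᶜ ×ˢ {j}) μ + rowProduction ({j} ×ˢ (insert j (L j))ᶜ) μ) -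
        Real.log (1 - (1 / 2) ^ (n - (j : ℕ))) := by
    have h := sum_mul_log_marginalDensity_insert_le_add hμ hsupp (by simpa using hV) (hL j)
    have hsucc : insert j (L j) = L (j + 1) := by
      ext i
      simp only [L, mem_insert, mem_filter_univ, Fin.ext_iff]
      omega
    have hcard : #(L j)ᶜ = n - j := by
      have hIio : L j = Iio j := by ext; simp [L]
      rw [card_compl, hIio, Fin.card_Iio, Fintype.card_fin]
    rw [hcard] at h
    rw [hsucc] at h ⊢
    linarith
  have telescope := sum_le_sum fun j (_ : j ∈ univ) ↦ stage j
  rw [Fin.sum_univ_eq_sum_range fun m ↦ T (m + 1) - T m, sum_range_sub, sum_sub_distrib,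
    sum_add_distrib, ← mul_sum, sum_add_distrib] at telescope
  have below := sum_rowProduction_product_singleton_le hμ.1 hL
  have into := sum_rowProduction_product_singleton_le hμ.1 (S := fun j ↦ {j}ᶜ) (by simp)
  have out := sum_rowProduction_singleton_product_le hμ.1 (S := fun j ↦ (insert j (L j))ᶜ) (by simp)
  have start : T 0 = 0 := by simp [T, L, marginalDensity_empty, hμ.2]
  have finish : T n = negEntropy μ + Real.log (Fintype.card (Fin n → V)) := by
    have hLn : L n = univ := by ext; simp [L]
    simp only [T, hLn, marginalDensity_univ]
    exact sum_mul_log_card_mul hμ.2 (Nat.cast_ne_zero.2 Fintype.card_ne_zero)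
  linarith

lemma mem_Stief_self_iff_linearIndependent {z : TState n n} :
    z ∈ Stief n n ↔ LinearIndependent (ZMod 2) z :=
  ⟨fun h ↦ linearIndependent_of_top_le_span_of_card_eq_finrank (Eq.ge h) (by simp),
    fun h ↦ h.span_eq_top_of_card_eq_finrank' (by simp)⟩

lemma card_Stief_self (n : ℕ) : (Nat.card (Stief n n) : ℝ) =
    Fintype.card (TState n n) * ∏ j : Fin n, (1 - (1 / 2 : ℝ) ^ (n - (j : ℕ))) := by
  have hset : Stief n n = {z | LinearIndependent (ZMod 2) z} :=
    Set.ext fun _ ↦ mem_Stief_self_iff_linearIndependent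
  have hcard : Nat.card (Stief n n) = ∏ j : Fin n, (2 ^ n - 2 ^ (j : ℕ)) := by
    rw [hset]
    exact (card_linearIndependent (K := ZMod 2) (V := Fin n → ZMod 2) (k := n) (by simp)).trans
      (by simp)
  have hfactor (j : Fin n) : (2 : ℝ) ^ n * (1 - (1 / 2) ^ (n - (j : ℕ))) = 2 ^ n - 2 ^ (j : ℕ) := by
    rw [mul_sub, mul_one, one_div, inv_pow, pow_sub₀ _ two_ne_zero j.2.le]
    field_simp
  have htotal : (Fintype.card (TState n n) : ℝ) = ∏ _j : Fin n, 2 ^ n := by simp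
  rw [hcard, htotal, ← prod_mul_distrib, Nat.cast_prod]
  refine prod_congr rfl fun j _ ↦ ?_
  rw [hfactor, Nat.cast_sub (Nat.pow_le_pow_right two_pos j.2.le)]
  norm_cast

lemma negEntropy_add_log_card_Stief_self_le {μ : TState n n → ℝ}
    (hμ : μ ∈ stdSimplex ℝ (TState n n)) (hsupp : ∀ z, μ z ≠ 0 → z ∈ Stief n n) :
    negEntropy μ + Real.log (Nat.card (Stief n n)) ≤ 9 * rowProduction univ.offDiag μ := by
  have hne (j : Fin n) : 1 - (1 / 2 : ℝ) ^ (n - (j : ℕ)) ≠ 0 :=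
    (sub_pos.2 (pow_lt_one₀ (by norm_num) (by norm_num) (by omega))).ne'
  have h := negEntropy_add_sum_log_le hμ
    (fun z hz ↦ mem_Stief_self_iff_linearIndependent.1 (hsupp z hz)) (by simp)
  rwa [card_Stief_self, Real.log_mul (Nat.cast_ne_zero.2 Fintype.card_ne_zero)
    (prod_ne_zero_iff.2 fun j _ ↦ hne j), Real.log_prod fun j _ ↦ hne j, ← add_assoc]

lemma log_card_TState_le (n k : ℕ) : Real.log (Fintype.card (TState n k)) ≤ n * k := by
  have hcard : (Fintype.card (TState n k) : ℝ) = 2 ^ (k * n) := by simp [pow_mul]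
  rw [hcard, Real.log_pow, Nat.cast_mul, mul_comm (k : ℝ)]
  exact mul_le_of_le_one_right (by positivity) (Real.log_two_lt_d9.le.trans (by norm_num))

lemma log_card_Stief_le (n k : ℕ) : Real.log (Nat.card (Stief n k)) ≤ n * k := by
  rcases (Nat.card (Stief n k)).eq_zero_or_pos with h | h
  · rw [h, Nat.cast_zero, Real.log_zero]
    positivity
  · refine (Real.log_le_log (Nat.cast_pos.2 h) (Nat.cast_le.2 ?_)).trans (log_card_TState_le n k)
    exact (Nat.card_le_card_of_injective _ Subtype.val_injective).trans_eq Nat.card_eq_fintype_card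

lemma tvDist_transQ_pow_self_le (hn : 64 ≤ n) {t : ℕ} (ht : 27 * (n : ℝ) ^ 2 * Real.log n ≤ t)
    {x : TState n n} (hx : x ∈ Stief n n) :
    tvDist ((transQ n n ^ t) x) (unifOn (Stief n n)) ≤ 1 / 8 := by
  have : Nontrivial (Fin n) := Fin.nontrivial_iff_two_le.2 (by omega)
  have hn' : (64 : ℝ) ≤ n := by exact_mod_cast hn
  have hsupp := mem_Stief_of_transQ_pow_ne_zero hx
  have decay := negEntropy_transQ_pow_add_le (x := x) (t₀ := 0) (γ := 1 / 9) (δ := 0)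
    (by norm_num) (by nlinarith) (Real.log_natCast_nonneg (Nat.card (Stief n n))) le_rfl
    (fun t _ ↦ by
      have h := negEntropy_add_log_card_Stief_self_le (transQ_pow_mem_stdSimplex t x) (hsupp t)
      linarith) t
  rw [zero_add, add_zero] at decay
  have hrate : 3 * Real.log n ≤ 1 / 9 / (n * (n - 1)) * t := by
    have hlog : 0 ≤ Real.log n := Real.log_natCast_nonneg n
    rw [div_div, div_mul_eq_mul_div, one_mul, le_div_iff₀ (by nlinarith)]
    nlinarith
  have hexp : Real.exp (-(1 / 9 / (n * (n - 1)) * t)) ≤ ((n : ℝ) ^ 3)⁻¹ := by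
    rw [Real.exp_neg]
    refine inv_anti₀ (by positivity) ?_
    rw [← Real.log_le_iff_le_exp (by positivity), Real.log_pow]
    exact_mod_cast hrate
  have hsq : tvDist ((transQ n n ^ t) x) (unifOn (Stief n n)) ^ 2 ≤ (1 / 8) ^ 2 := by
    refine (sq_tvDist_unifOn_le (transQ_pow_mem_stdSimplex t x) (hsupp t)).trans (decay.trans ?_)
    calc Real.exp (-(1 / 9 / (n * (n - 1)) * t)) * Real.log (Nat.card (Stief n n))
        ≤ ((n : ℝ) ^ 3)⁻¹ * (n * n) := by gcongr; exact log_card_Stief_le n n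
      _ = 1 / n := by field_simp
      _ ≤ (1 / 8) ^ 2 := by rw [div_le_iff₀ (by positivity)]; linarith
  exact (pow_le_pow_iff_left₀ (by unfold tvDist; positivity) (by norm_num) two_ne_zero).1 hsq

end EntropyInequality

/-! ### Reduction to the square walk -/

section Pushforward

lemma map_lazyStep {X Y κ : Type*} [Finite X] [Finite Y] {π : X → Y} {s : Finset κ} {σ : κ → X → X}
    {τ : κ → Y → Y} (hσ : ∀ p ∈ s, Function.Involutive (σ p))
    (hτ : ∀ p ∈ s, Function.Involutive (τ p)) (hπ : ∀ p, Function.Semiconj π (σ p) (τ p))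
    (f : X → ℝ) :
    FunOnFinite.map π (lazyStep s σ f) = lazyStep s τ (FunOnFinite.map π f) := by
  classical
  have := Fintype.ofFinite X
  ext y
  have fibre (p : κ) (hp : p ∈ s) :
      ∑ x with π x = y, f (σ p x) = ∑ x with π x = τ p y, f x :=
    sum_equiv (hσ p hp).toPerm (fun x ↦ by simp [(hπ p).eq, (hτ p hp).injective.eq_iff])
      fun _ _ ↦ rfl
  simp only [lazyStep, FunOnFinite.map_apply_apply]
  rw [← expect_congr rfl fibre, expect_sum_comm, ← sum_add_distrib, sum_div]

variable {X Y : Type*} [Fintype X] [Fintype Y]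

lemma tvDist_map_le (π : X → Y) (f g : X → ℝ) :
    tvDist (FunOnFinite.map π f) (FunOnFinite.map π g) ≤ tvDist f g := by
  classical
  simp only [tvDist, FunOnFinite.map_apply_apply, ← sum_sub_distrib]
  gcongr
  calc ∑ y, |∑ x with π x = y, (f x - g x)| ≤ ∑ y, ∑ x with π x = y, |f x - g x| :=
        sum_le_sum fun y _ ↦ abs_sum_le_sum_abs _ _
    _ = ∑ x, |f x - g x| := sum_fiberwise _ _ _

lemma tvDist_vecMul_le {w : X → ℝ} (hw : w ∈ stdSimplex ℝ X) (M : Matrix X Y ℝ) (ν : Y → ℝ) :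
    tvDist (Matrix.vecMul w M) ν ≤ ∑ x, w x * tvDist (M x) ν := by
  have pointwise (y : Y) : |Matrix.vecMul w M y - ν y| ≤ ∑ x, w x * |M x y - ν y| := by
    have hdiff : Matrix.vecMul w M y - ν y = ∑ x, w x * (M x y - ν y) := by
      simp only [Matrix.vecMul, dotProduct, mul_sub, sum_sub_distrib, ← sum_mul, hw.2, one_mul]
    rw [hdiff]
    refine (abs_sum_le_sum_abs _ _).trans_eq (sum_congr rfl fun x _ ↦ ?_)
    rw [abs_mul, abs_of_nonneg (hw.1 x)]
  calc tvDist (Matrix.vecMul w M) ν ≤ 1 / 2 * ∑ y, ∑ x, w x * |M x y - ν y| := by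
        unfold tvDist
        gcongr
        exact pointwise _
    _ = ∑ x, w x * tvDist (M x) ν := by
        rw [sum_comm, mul_sum]
        simp only [tvDist, mul_sum, mul_left_comm]

lemma tvDist_unifOn_le_of_vecMul_eq {G : Set X} (hG : G.Nonempty) {M : Matrix X X ℝ}
    (hM : Matrix.vecMul (unifOn G) M = unifOn G) {ν : X → ℝ} {ε : ℝ}
    (h : ∀ x ∈ G, tvDist (M x) ν ≤ ε) : tvDist (unifOn G) ν ≤ ε := by
  have hunif := unifOn_mem_stdSimplex hG
  calc tvDist (unifOn G) ν ≤ ∑ x, unifOn G x * tvDist (M x) ν := by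
        simpa only [hM] using tvDist_vecMul_le hunif M ν
    _ ≤ ∑ x, unifOn G x * ε := by
        refine sum_le_sum fun x _ ↦ ?_
        by_cases hx : x ∈ G
        · exact mul_le_mul_of_nonneg_left (h x hx) (hunif.1 x)
        · simp [unifOn, hx]
    _ = ε := by rw [← sum_mul, hunif.2, one_mul]

end Pushforward

section DualSpanning

variable {n k : ℕ}

lemma span_image_eq_top_iff {ι κ K : Type*} [Field K] [Fintype κ] {z : ι → κ → K} {S : Set ι} :
    Submodule.span K (z '' S) = ⊤ ↔ ∀ l : κ → K, l ≠ 0 → ∃ i ∈ S, l ⬝ᵥ z i ≠ 0 := by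
  classical
  have hker (l : κ → K) : Submodule.span K (z '' S) ≤ LinearMap.ker (dotProductEquiv K κ l) ↔
      ∀ i ∈ S, l ⬝ᵥ z i = 0 := by
    simp [Submodule.span_le, Set.subset_def]
  constructor
  · intro h l hl
    by_contra! hvanish
    rw [← hker, h, top_le_iff, LinearMap.ker_eq_top, map_eq_zero_iff _
      (dotProductEquiv K κ).injective] at hvanish
    exact hl hvanish
  · intro h
    by_contra hne
    obtain ⟨f, hf, hle⟩ := Submodule.exists_le_ker_of_lt_top _ (lt_top_iff_ne_top.2 hne)
    obtain ⟨l, rfl⟩ := (dotProductEquiv K κ).surjective f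
    obtain ⟨i, hi, hil⟩ := h l fun hl ↦ hf (by rw [hl, map_zero])
    exact hil ((hker l).1 hle i hi)

lemma mem_Stief_iff {z : TState n k} :
    z ∈ Stief n k ↔ ∀ l : Fin k → ZMod 2, l ≠ 0 → ∃ i, l ⬝ᵥ z i ≠ 0 := by
  simpa [Stief] using span_image_eq_top_iff (z := z) (S := Set.univ)

/- A column outside the column space exists because the column space has at most `2 ^ k < 2 ^ n`
elements. -/
lemma exists_mem_Stief_succ_init_eq (hkn : k < n) {x : TState n k} (hx : x ∈ Stief n k) :
    ∃ z ∈ Stief n (k + 1), (fun i ↦ Fin.init (z i)) = x := by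
  obtain ⟨c, hc⟩ : ∃ c : Fin n → ZMod 2, ∀ l, (fun i ↦ l ⬝ᵥ x i) ≠ c := by
    by_contra! hsurj
    have hcard := Fintype.card_le_of_surjective (fun (l : Fin k → ZMod 2) i ↦ l ⬝ᵥ x i) hsurj
    simp only [Fintype.card_fun, ZMod.card, Fintype.card_fin] at hcard
    exact (Nat.pow_lt_pow_right one_lt_two hkn).not_ge hcard
  refine ⟨fun i ↦ Fin.snoc (x i) (c i), mem_Stief_iff.2 fun l hl ↦ ?_, by simp⟩
  have hdot (i : Fin n) : l ⬝ᵥ (Fin.snoc (x i) (c i) : Fin (k + 1) → ZMod 2) =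
      Fin.init l ⬝ᵥ x i + l (Fin.last k) * c i := by
    simp [dotProduct, Fin.sum_univ_castSucc, Fin.init]
  simp only [hdot]
  obtain hlast | hlast : l (Fin.last k) = 0 ∨ l (Fin.last k) = 1 := by
    generalize l (Fin.last k) = y; revert y; decide
  · simp only [hlast, zero_mul, add_zero]
    refine mem_Stief_iff.1 hx _ fun hinit ↦ hl ?_
    rw [← Fin.snoc_init_self l, hinit, hlast]
    ext j
    refine Fin.lastCases ?_ (fun j ↦ ?_) j <;> simp
  · by_contra! hvanish
    refine hc (Fin.init l) (funext fun i ↦ ?_)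
    simpa [hlast, CharTwo.add_eq_zero] using hvanish i

end DualSpanning

section TransvectionWalk

variable {n k : ℕ}

lemma map_init_transQ_pow (t : ℕ) (x : TState n (k + 1)) :
    FunOnFinite.map (fun (z : TState n (k + 1)) i ↦ Fin.init (z i)) ((transQ n (k + 1) ^ t) x) =
      (transQ n k ^ t) fun i ↦ Fin.init (x i) := by
  induction t with
  | zero =>
    have one_row {k : ℕ} (x : TState n k) :
        (1 : Matrix (TState n k) (TState n k) ℝ) x = Pi.single x 1 :=
      funext fun y ↦ Matrix.one_eq_pi_single
    rw [pow_zero, pow_zero, one_row, one_row, FunOnFinite.map_piSingle]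
  | succ t ih =>
    rw [transQ_pow_succ, transQ_pow_succ, ← ih]
    refine map_lazyStep (fun p hp ↦ rowAdd_involutive_of_mem_offDiag hp)
      (fun p hp ↦ rowAdd_involutive_of_mem_offDiag hp) (fun p z ↦ ?_) _
    ext i l
    rcases eq_or_ne i p.2 with rfl | hi
    · simp [rowAdd, Fin.init]
    · simp [rowAdd, hi]

lemma vecMul_unifOn_transQ_pow [Nontrivial (Fin n)] (t : ℕ) :
    Matrix.vecMul (unifOn (Stief n k)) (transQ n k ^ t) = unifOn (Stief n k) := by
  have hstep : rowStep (unifOn (Stief n k)) = unifOn (Stief n k) := by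
    ext z
    have invariant : ∀ p ∈ univ.offDiag,
        unifOn (Stief n k) (rowAdd p.1 p.2 z) = unifOn (Stief n k) z := fun p hp ↦ by
      have h := rowAdd_mem_Stief (mem_offDiag.1 hp).2.2 z
      by_cases hz : z ∈ Stief n k <;> simp [unifOn, h, hz]
    rw [rowStep, lazyStep, expect_congr rfl invariant, expect_const univ_offDiag_nonempty,
      add_self_div_two]
  induction t with
  | zero => rw [pow_zero, Matrix.vecMul_one]
  | succ t ih => rw [pow_succ, ← Matrix.vecMul_vecMul, ih, vecMul_transQ, hstep]

lemma exists_forall_tvDist_transQ_pow_le (hn : 64 ≤ n) {t : ℕ}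
    (ht : 27 * (n : ℝ) ^ 2 * Real.log n ≤ t) (hkn : k ≤ n) :
    ∃ ν : TState n k → ℝ, ∀ x ∈ Stief n k, tvDist ((transQ n k ^ t) x) ν ≤ 1 / 8 := by
  induction hkn using Nat.decreasingInduction with
  | self => exact ⟨_, fun x hx ↦ tvDist_transQ_pow_self_le hn ht hx⟩
  | of_succ k hkn ih =>
    obtain ⟨ν, hν⟩ := ih
    refine ⟨FunOnFinite.map (fun z i ↦ Fin.init (z i)) ν, fun x hx ↦ ?_⟩
    obtain ⟨z, hz, rfl⟩ := exists_mem_Stief_succ_init_eq hkn hx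
    rw [← map_init_transQ_pow]
    exact (tvDist_map_le _ _ _).trans (hν z hz)

lemma tvDist_transQ_pow_le_of_sq_mul_log_le (hn : 64 ≤ n) (hkn : k ≤ n) {t : ℕ}
    (ht : 27 * (n : ℝ) ^ 2 * Real.log n ≤ t) {x : TState n k} (hx : x ∈ Stief n k) :
    tvDist ((transQ n k ^ t) x) (unifOn (Stief n k)) ≤ 1 / 4 := by
  have : Nontrivial (Fin n) := Fin.nontrivial_iff_two_le.2 (by omega)
  obtain ⟨ν, hν⟩ := exists_forall_tvDist_transQ_pow_le hn ht hkn
  have hunif := tvDist_unifOn_le_of_vecMul_eq ⟨x, hx⟩ (vecMul_unifOn_transQ_pow t) hν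
  have h := tvDist_triangle ((transQ n k ^ t) x) ν (unifOn (Stief n k))
  have hcomm : tvDist ν (unifOn (Stief n k)) = tvDist (unifOn (Stief n k)) ν := by
    simp only [tvDist, abs_sub_comm]
  linarith [hν x hx]

end TransvectionWalk

/-! ### Re-randomising the rows outside a spanning set -/

section MarginalEntropy

variable {ι V : Type*} [Fintype ι] [DecidableEq ι] [Fintype V]

/-- The relative entropy, with respect to the uniform law, of the marginal of `μ` on the rows
in `S`. -/
def marginalEntropy (μ : (ι → V) → ℝ) (S : Finset ι) : ℝ :=
  ∑ z, μ z * Real.log (marginalDensity μ S z)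

variable [Nonempty V] {μ : (ι → V) → ℝ} {S T : Finset ι}

lemma marginalEntropy_univ (hμ : ∑ z, μ z = 1) :
    marginalEntropy μ univ = negEntropy μ + Real.log (Fintype.card (ι → V)) := by
  simp_rw [marginalEntropy, marginalDensity_univ]
  exact sum_mul_log_card_mul hμ (Nat.cast_ne_zero.2 Fintype.card_ne_zero)

lemma expect_marginalDensity (μ : (ι → V) → ℝ) (S : Finset ι) :
    𝔼 z, marginalDensity μ S z = ∑ z, μ z := by
  simpa using expect_marginalDensity_mul (S := S) μ (h := fun _ ↦ 1) fun _ _ ↦ rfl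

lemma expect_mul_of_piecewise {f g : (ι → V) → ℝ} (hf : ∀ z y, f (S.piecewise z y) = f z)
    (hg : ∀ z y, g (S.piecewise y z) = g z) : 𝔼 z, f z * g z = (𝔼 z, f z) * 𝔼 z, g z := by
  have swap := sum_sum_piecewise S fun z y ↦ f z * g y
  simp_rw [hf, hg, sum_const, ← smul_sum, card_univ, nsmul_eq_mul, ← mul_sum, ← sum_mul] at swap
  have hN : (Fintype.card (ι → V) : ℝ) ≠ 0 := Nat.cast_ne_zero.2 Fintype.card_ne_zero
  simp_rw [Fintype.expect_eq_sum_div_card]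
  field_simp
  rw [← swap, mul_comm]

lemma marginalEntropy_eq_expect (μ : (ι → V) → ℝ) (S : Finset ι) :
    marginalEntropy μ S = 𝔼 z, marginalDensity μ univ z * Real.log (marginalDensity μ S z) :=
  (expect_marginalDensity_mul μ fun z y ↦ by rw [piecewise_univ]).symm

/- The Gibbs inequality for the product of the two marginals, which by independence is a probability
density. -/
lemma marginalEntropy_add_le (hμ : μ ∈ stdSimplex ℝ (ι → V)) (hST : Disjoint S T) :
    marginalEntropy μ S + marginalEntropy μ T ≤ marginalEntropy μ univ := by
  have product_mass : 𝔼 z, marginalDensity μ S z * marginalDensity μ T z = 1 := by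
    rw [expect_mul_of_piecewise (S := S), expect_marginalDensity, expect_marginalDensity, hμ.2,
      one_mul]
    · exact fun z y ↦ marginalDensity_congr fun i hi ↦ by simp [hi]
    · exact fun z y ↦ marginalDensity_congr fun i hi ↦ by simp [disjoint_right.1 hST hi]
  have gibbs (z : ι → V) :
      marginalDensity μ univ z * Real.log (marginalDensity μ S z) +
        marginalDensity μ univ z * Real.log (marginalDensity μ T z) ≤
      marginalDensity μ univ z * Real.log (marginalDensity μ univ z) +
        (marginalDensity μ S z * marginalDensity μ T z - marginalDensity μ univ z) := by
    have hprod := mul_nonneg (marginalDensity_nonneg hμ.1 S z) (marginalDensity_nonneg hμ.1 T z)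
    by_cases hz : μ z = 0
    · simpa [marginalDensity_univ, hz] using hprod
    have hS := marginalDensity_pos hμ.1 S hz
    have hT := marginalDensity_pos hμ.1 T hz
    rw [← mul_add, ← Real.log_mul hS.ne' hT.ne']
    exact mul_log_le_mul_log_add_sub (marginalDensity_nonneg hμ.1 univ z) hprod
      fun _ ↦ mul_pos hS hT
  simp_rw [marginalEntropy_eq_expect, ← expect_add_distrib]
  refine (expect_le_expect fun z _ ↦ gibbs z).trans_eq ?_
  rw [expect_add_distrib, expect_sub_distrib, product_mass, expect_marginalDensity, hμ.2, sub_self,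
    add_zero]

end MarginalEntropy

section SpanningRows

variable {ι V : Type*} [AddCommGroup V] [Module (ZMod 2) V]

open scoped Classical in
/-- The indicator of the event that the rows of `z` in `S` do not span. -/
def nonspanning (S : Finset ι) (z : ι → V) : ℝ :=
  if Submodule.span (ZMod 2) (z '' S) = ⊤ then 0 else 1

lemma nonspanning_le_one (S : Finset ι) (z : ι → V) : nonspanning S z ≤ 1 := by
  rw [nonspanning]
  split_ifs <;> norm_num

lemma nonspanning_nonneg (S : Finset ι) (z : ι → V) : 0 ≤ nonspanning S z := by
  rw [nonspanning]
  split_ifs <;> norm_num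

variable [DecidableEq ι] {S : Finset ι}

lemma rowWord_product_compl [Fintype ι] (S : Finset ι) (ε : ι × ι → ZMod 2) (z : ι → V) :
    rowWord (S ×ˢ Sᶜ) ε z = S.piecewise z fun i ↦ rowComb S z (fun a ↦ ε (a, i)) + z i := by
  ext i
  rw [rowWord, sum_product]
  by_cases hi : i ∈ S <;> simp [hi, rowComb_apply, add_comm]

lemma expect_rowWord_product_compl [Fintype ι] [Fintype V] {z : ι → V}
    (hz : Submodule.span (ZMod 2) (z '' S) = ⊤) (g : (ι → V) → ℝ) :
    𝔼 ε, g (rowWord (S ×ˢ Sᶜ) ε z) = 𝔼 y, g (S.piecewise z y) := by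
  have surj : Function.Surjective (rowComb S z) := by
    rw [← LinearMap.range_eq_top, range_rowComb, hz]
  let φ : (ι × ι → ZMod 2) →ₗ[ZMod 2] ι → V :=
    LinearMap.pi fun i ↦ rowComb S z ∘ₗ LinearMap.funLeft (ZMod 2) (ZMod 2) fun a ↦ (a, i)
  have hφ : 𝔼 ε, g (S.piecewise z (φ ε + z)) = 𝔼 y, g (S.piecewise z (y + z)) :=
    expect_comp_addMonoidHom φ.toAddMonoidHom (fun v ↦ g (S.piecewise z (v + z))) fun y ↦ by
      choose c hc using fun i ↦ surj (y i)
      exact ⟨fun p ↦ c p.2 p.1, fun x ↦ by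
        rw [show φ.toAddMonoidHom (fun p ↦ c p.2 p.1) = y from funext hc]⟩
  rw [expect_add_right fun y ↦ g (S.piecewise z y)] at hφ
  simp_rw [← hφ, rowWord_product_compl]
  rfl

lemma nonspanning_piecewise (S : Finset ι) (z y : ι → V) :
    nonspanning S (S.piecewise z y) = nonspanning S z := by
  rw [nonspanning, nonspanning, Set.image_congr fun i hi ↦ S.piecewise_eq_of_mem z y (mem_coe.1 hi)]

lemma span_image_rowAdd {a b : ι} (hb : b ∉ S) (z : ι → V) :
    Submodule.span (ZMod 2) (rowAdd a b z '' S) = Submodule.span (ZMod 2) (z '' S) := by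
  congr 1
  exact Set.image_congr fun i hi ↦ Function.update_of_ne (ne_of_mem_of_not_mem hi hb) _ _

open scoped Classical in
lemma sum_eq_sum_spanning_add [Fintype ι] [Fintype V] (S : Finset ι) (F : (ι → V) → ℝ) :
    ∑ z, F z = ∑ z with Submodule.span (ZMod 2) (z '' S) = ⊤, F z + ∑ z, nonspanning S z * F z := by
  rw [sum_filter, ← sum_add_distrib]
  refine sum_congr rfl fun z _ ↦ ?_
  rw [nonspanning]
  split_ifs <;> simp

lemma neg_one_le_mul_log {x : ℝ} (hx : 0 ≤ x) : -1 ≤ x * Real.log x := by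
  rcases hx.eq_or_lt with rfl | hx
  · simp
  · linarith [Real.one_sub_inv_le_log_of_pos hx, mul_le_mul_of_nonneg_left
      (Real.one_sub_inv_le_log_of_pos hx) hx.le, mul_inv_cancel₀ hx.ne']

lemma neg_expect_nonspanning_le [Fintype ι] [Fintype V] {μ : (ι → V) → ℝ} (hμ : 0 ≤ μ)
    (S : Finset ι) : -𝔼 z : ι → V, nonspanning S z ≤
      ∑ z, nonspanning S z * (μ z * Real.log (marginalDensity μ S z)) := by
  have marginal := expect_marginalDensity_mul (S := S) μ
    (h := fun z ↦ nonspanning S z * Real.log (marginalDensity μ S z)) fun z y ↦ by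
      rw [nonspanning_piecewise,
        marginalDensity_congr fun i hi ↦ S.piecewise_eq_of_mem z y hi]
  simp_rw [mul_left_comm (nonspanning S _)]
  rw [← marginal, ← expect_neg_distrib]
  refine expect_le_expect fun z _ ↦ ?_
  rw [mul_left_comm]
  have h := mul_le_mul_of_nonneg_left (neg_one_le_mul_log (marginalDensity_nonneg hμ S z))
    (nonspanning_nonneg S z)
  rwa [mul_neg_one] at h

open scoped Classical in
lemma sum_spanning_mul_log_le [Fintype ι] [Fintype V] {μ : (ι → V) → ℝ} (hμ : 0 ≤ μ)
    (S : Finset ι) :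
    ∑ z with Submodule.span (ZMod 2) (z '' S) = ⊤, μ z * Real.log (marginalDensity μ univ z) ≤
      rowProduction (S ×ˢ Sᶜ) μ + ∑ z with Submodule.span (ZMod 2) (z '' S) = ⊤,
        μ z * Real.log (marginalDensity μ S z) := by
  refine (sum_mul_log_le_rowProduction_add (A := S ×ˢ Sᶜ)
    (fst_ne_snd_of_mem_product disjoint_compl_right) (fun p hp z ↦ ?_) hμ
    (marginalDensity_nonneg hμ univ) fun z _ hz ↦ marginalDensity_pos hμ univ hz).trans_eq ?_
  · simp only [mem_filter, mem_univ, true_and,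
      span_image_rowAdd (mem_compl.1 (mem_product.1 hp).2)]
  refine congrArg _ (sum_congr rfl fun z hz ↦ ?_)
  rw [expect_rowWord_product_compl (mem_filter.1 hz).2]
  simp_rw [marginalDensity_univ, ← mul_expect, marginalDensity_eq_card_mul_expect]

lemma marginalEntropy_univ_le [Fintype ι] [Fintype V] {μ : (ι → V) → ℝ} (hμ : 0 ≤ μ)
    (S : Finset ι) :
    marginalEntropy μ univ ≤ rowProduction (S ×ˢ Sᶜ) μ + marginalEntropy μ S +
      (𝔼 z : ι → V, nonspanning S z) +
        ∑ z, nonspanning S z * (μ z * Real.log (marginalDensity μ univ z)) := by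
  have hspan := sum_spanning_mul_log_le hμ S
  have hnon := neg_expect_nonspanning_le hμ S
  rw [marginalEntropy, marginalEntropy, sum_eq_sum_spanning_add S,
    sum_eq_sum_spanning_add S fun z ↦ μ z * Real.log (marginalDensity μ S z)]
  linarith

end SpanningRows

/-! ### Random colour classes of rows -/

section Weight

variable {ι κ : Type*} [Fintype ι] [Fintype κ]

/-- The number of rows of `z` on which the linear functional `l ⬝ᵥ ·` does not vanish. -/
def weight (l : κ → ZMod 2) (z : ι → κ → ZMod 2) : ℕ := #{j | l ⬝ᵥ z j ≠ 0}

lemma prod_ite_dotProduct (r : ℝ) (l : κ → ZMod 2) (z : ι → κ → ZMod 2) :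
    ∏ j, (if l ⬝ᵥ z j = 0 then 1 else r) = r ^ weight l z := by
  rw [prod_ite, prod_const_one, prod_const, one_mul, weight]

variable [DecidableEq κ]

/-- The weight enumerator `∑ r ^ weight l z` over the nonzero functionals `l`. If every row is
discarded with probability `r`, it bounds the probability that the remaining rows do not span. -/
def weightEnumerator (r : ℝ) (z : ι → κ → ZMod 2) : ℝ := ∑ l with l ≠ 0, r ^ weight l z

lemma expect_ite_dotProduct {l : κ → ZMod 2} (hl : l ≠ 0) (r : ℝ) :
    𝔼 v : κ → ZMod 2, (if l ⬝ᵥ v = 0 then 1 else r) = (1 + r) / 2 := by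
  obtain ⟨j, hj⟩ := Function.ne_iff.1 hl
  simp_rw [dotProduct_comm l]
  refine (expect_sum_mul_of_ne_zero (mem_univ j) hj fun x ↦ if x = 0 then 1 else r).trans ?_
  simp

lemma card_ne_zero_le : (#{l : κ → ZMod 2 | l ≠ 0} : ℝ) ≤ 2 ^ Fintype.card κ := by
  exact_mod_cast (card_le_univ _).trans_eq (by simp)

lemma expect_weightEnumerator_le [DecidableEq ι] {r : ℝ} (hr : 0 ≤ r) :
    𝔼 z : ι → κ → ZMod 2, weightEnumerator r z ≤
      2 ^ Fintype.card κ * ((1 + r) / 2) ^ Fintype.card ι := by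
  have term (l : κ → ZMod 2) (hl : l ∈ univ.filter (· ≠ 0)) :
      𝔼 z : ι → κ → ZMod 2, r ^ weight l z = ((1 + r) / 2) ^ Fintype.card ι := by
    simp_rw [← prod_ite_dotProduct]
    rw [expect_prod_pi fun (_ : ι) v ↦ if l ⬝ᵥ v = 0 then 1 else r]
    rw [expect_ite_dotProduct (mem_filter.1 hl).2, prod_const, card_univ]
  simp_rw [weightEnumerator]
  rw [expect_sum_comm, sum_congr rfl term, sum_const, nsmul_eq_mul]
  exact mul_le_mul_of_nonneg_right card_ne_zero_le (by positivity)

end Weight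

section Colouring

variable {ι κ C : Type*} [Fintype ι] [Fintype κ] [DecidableEq κ] [DecidableEq C]

/-- The rows that receive the colour `i` under the colouring `c`. -/
def colourClass (c : ι → C) (i : C) : Finset ι := {j | c j = i}

lemma nonspanning_colourClass_le (c : ι → C) (i : C) (z : ι → κ → ZMod 2) :
    nonspanning (colourClass c i) z ≤
      ∑ l with l ≠ 0, ∏ j, if l ⬝ᵥ z j = 0 then 1 else 1 - if c j = i then (1 : ℝ) else 0 := by
  have prod_nn (l : κ → ZMod 2) :
      0 ≤ ∏ j, if l ⬝ᵥ z j = 0 then 1 else 1 - if c j = i then (1 : ℝ) else 0 :=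
    prod_nonneg fun j _ ↦ by split_ifs <;> norm_num
  rw [nonspanning]
  split_ifs with hspan
  · exact sum_nonneg fun l _ ↦ prod_nn l
  rw [span_image_eq_top_iff] at hspan
  push Not at hspan
  obtain ⟨l, hl, hz⟩ := hspan
  refine le_of_eq_of_le (prod_eq_one fun j _ ↦ ?_).symm
    (single_le_sum (fun l _ ↦ prod_nn l) (mem_filter.2 ⟨mem_univ l, hl⟩))
  by_cases hj : c j = i
  · rw [if_pos (hz j (by simpa [colourClass] using hj))]
  · simp [hj]

variable [DecidableEq ι] [Fintype C]

lemma expect_nonspanning_colourClass_le (i : C) (z : ι → κ → ZMod 2) :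
    𝔼 c : ι → C, nonspanning (colourClass c i) z ≤
      weightEnumerator (1 - 1 / (Fintype.card C : ℝ)) z := by
  have : Nonempty C := ⟨i⟩
  have row (x : ZMod 2) : 𝔼 a : C, (if x = 0 then 1 else 1 - if a = i then (1 : ℝ) else 0) =
      if x = 0 then 1 else 1 - 1 / (Fintype.card C : ℝ) := by
    split_ifs
    · exact Fintype.expect_const 1
    · simp [expect_sub_distrib]
  refine (expect_le_expect fun c _ ↦ nonspanning_colourClass_le c i z).trans_eq ?_
  rw [expect_sum_comm, weightEnumerator]
  refine sum_congr rfl fun l _ ↦ ?_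
  rw [expect_prod_pi fun j (a : C) ↦
    if l ⬝ᵥ z j = 0 then 1 else 1 - if a = i then (1 : ℝ) else 0]
  simp_rw [row, prod_ite_dotProduct]

lemma expect_ite_colour_eq (a : ι) (i : C) :
    𝔼 c : ι → C, (if c a = i then (1 : ℝ) else 0) = 1 / Fintype.card C := by
  have : Nonempty C := ⟨i⟩
  have h := expect_prod_pi fun (j : ι) (x : C) ↦ if j = a then if x = i then (1 : ℝ) else 0 else 1
  simp only [prod_ite_eq', mem_univ, if_true] at h
  rw [h, prod_eq_single_of_mem a (mem_univ a) fun b _ hb ↦ by simp [hb]]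
  simp

lemma expect_rowProduction_colourClass_le {V : Type*} [AddCommGroup V] [Fintype V]
    {μ : (ι → V) → ℝ} (hμ : 0 ≤ μ) (i : C) :
    𝔼 c : ι → C, rowProduction (colourClass c i ×ˢ (colourClass c i)ᶜ) μ ≤
      rowProduction univ.offDiag μ / Fintype.card C := by
  have source (c : ι → C) : rowProduction (colourClass c i ×ˢ (colourClass c i)ᶜ) μ ≤
      ∑ p ∈ univ.offDiag,
        (if c p.1 = i then 1 else 0) * entropyProduction (rowAdd p.1 p.2) μ := by
    simp_rw [ite_mul, one_mul, zero_mul]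
    rw [← sum_filter]
    refine rowProduction_mono (fun p hp ↦ ?_) hμ
    simp only [colourClass, mem_product, mem_compl, mem_filter, mem_univ, true_and] at hp
    simp only [mem_filter, mem_offDiag, mem_univ, true_and]
    exact ⟨fun h ↦ hp.2 (h ▸ hp.1), hp.1⟩
  refine (expect_le_expect fun c _ ↦ source c).trans_eq ?_
  simp_rw [expect_sum_comm, ← expect_mul, expect_ite_colour_eq, ← mul_sum, rowProduction]
  ring

end Colouring

section EntropyInequality

lemma sum_mul_mul_log_le {X : Type*} [Fintype X] [Nonempty X] {μ p : X → ℝ}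
    (hμ : μ ∈ stdSimplex ℝ X) (hp0 : 0 ≤ p) (hp1 : p ≤ 1) {B : Finset X} {δ : ℝ} (hδ0 : 0 ≤ δ)
    (hδ : ∀ x ∉ B, p x ≤ δ) :
    ∑ x, p x * (μ x * Real.log (Fintype.card X * μ x)) ≤
      δ * (negEntropy μ + Real.log (Fintype.card X) + 1) +
        Real.log (Fintype.card X) * ∑ x ∈ B, μ x := by
  classical
  have hN : (0 : ℝ) < Fintype.card X := Nat.cast_pos.2 Fintype.card_pos
  have hlogN : 0 ≤ Real.log (Fintype.card X) := Real.log_natCast_nonneg _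
  have shifted_nonneg (x : X) :
      0 ≤ μ x * Real.log (Fintype.card X * μ x) + (Fintype.card X : ℝ)⁻¹ := by
    have h := mul_le_mul_of_nonneg_left
      (neg_one_le_mul_log (mul_nonneg hN.le (hμ.1 x))) (inv_nonneg.2 hN.le)
    rw [mul_assoc, inv_mul_cancel_left₀ hN.ne'] at h
    linarith
  have log_le (x : X) :
      μ x * Real.log (Fintype.card X * μ x) ≤ μ x * Real.log (Fintype.card X) := by
    by_cases hx : μ x = 0
    · simp [hx]
    have hx1 : μ x ≤ 1 := hμ.2 ▸ single_le_sum (fun y _ ↦ hμ.1 y) (mem_univ x)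
    refine mul_le_mul_of_nonneg_left (Real.log_le_log ?_ ?_) (hμ.1 x)
    · exact mul_pos hN ((hμ.1 x).lt_of_ne' hx)
    · exact mul_le_of_le_one_right hN.le hx1
  have term (x : X) : p x * (μ x * Real.log (Fintype.card X * μ x)) ≤
      δ * (μ x * Real.log (Fintype.card X * μ x) + (Fintype.card X : ℝ)⁻¹) +
        Real.log (Fintype.card X) * if x ∈ B then μ x else 0 := by
    split_ifs with hx
    · have h₁ := mul_le_mul_of_nonneg_left (log_le x) (hp0 x)
      have h₂ := mul_le_mul_of_nonneg_right (hp1 x) (mul_nonneg (hμ.1 x) hlogN)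
      have h₃ := mul_nonneg hδ0 (shifted_nonneg x)
      simp only [Pi.one_apply] at h₂
      linarith
    · have h₁ := mul_le_mul_of_nonneg_right (hδ x hx) (shifted_nonneg x)
      have h₂ := mul_nonneg (hp0 x) (inv_nonneg.2 hN.le)
      linarith
  refine (sum_le_sum fun x _ ↦ term x).trans_eq ?_
  rw [sum_add_distrib, ← mul_sum, ← mul_sum, sum_add_distrib, sum_mul_log_card_mul hμ.2 hN.ne',
    sum_const, card_univ, nsmul_eq_mul, mul_inv_cancel₀ hN.ne', sum_ite_mem, univ_inter]

variable {ι κ C : Type*} [Fintype ι] [DecidableEq ι] [Fintype κ] [DecidableEq κ] [Fintype C]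
  [DecidableEq C] {μ : (ι → κ → ZMod 2) → ℝ}

lemma expect_sum_nonspanning_colourClass_mul_le (hμ : μ ∈ stdSimplex ℝ (ι → κ → ZMod 2)) (i : C)
    {B : Finset (ι → κ → ZMod 2)} {δ : ℝ} (hδ0 : 0 ≤ δ)
    (hδ : ∀ z ∉ B, weightEnumerator (1 - 1 / (Fintype.card C : ℝ)) z ≤ δ) :
    𝔼 c : ι → C, ∑ z, nonspanning (colourClass c i) z *
        (μ z * Real.log (marginalDensity μ univ z)) ≤
      δ * (marginalEntropy μ univ + 1) +
        Real.log (Fintype.card (ι → κ → ZMod 2)) * ∑ z ∈ B, μ z := by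
  have : Nonempty C := ⟨i⟩
  simp_rw [expect_sum_comm, ← expect_mul, marginalDensity_univ]
  rw [marginalEntropy_univ hμ.2]
  refine sum_mul_mul_log_le hμ (fun z ↦ expect_nonneg fun c _ ↦ nonspanning_nonneg _ z)
    (fun z ↦ ?_) hδ0 fun z hz ↦ (expect_nonspanning_colourClass_le i z).trans (hδ z hz)
  exact expect_le univ_nonempty fun c _ ↦ nonspanning_le_one _ z

/- Two colour classes of a random colouring are disjoint, and each of them involves a given row
operation with probability at most `1 / card C`. -/
lemma marginalEntropy_univ_le_rowProduction_div {C : Type*} [Fintype C] [Nontrivial C]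
    (hμ : μ ∈ stdSimplex ℝ (ι → κ → ZMod 2)) {B : Finset (ι → κ → ZMod 2)} {δ : ℝ} (hδ0 : 0 ≤ δ)
    (hδ : ∀ z ∉ B, weightEnumerator (1 - 1 / (Fintype.card C : ℝ)) z ≤ δ) :
    marginalEntropy μ univ ≤ 2 * (rowProduction univ.offDiag μ / Fintype.card C +
      2 ^ Fintype.card κ * (1 - 1 / (2 * Fintype.card C)) ^ Fintype.card ι +
        (δ * (marginalEntropy μ univ + 1) +
          Real.log (Fintype.card (ι → κ → ZMod 2)) * ∑ z ∈ B, μ z)) := by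
  classical
  obtain ⟨i₀, i₁, hne⟩ := exists_pair_ne C
  let cost (i : C) (c : ι → C) : ℝ :=
    rowProduction (colourClass c i ×ˢ (colourClass c i)ᶜ) μ +
      (𝔼 z : ι → κ → ZMod 2, nonspanning (colourClass c i) z) +
        ∑ z, nonspanning (colourClass c i) z * (μ z * Real.log (marginalDensity μ univ z))
  have two_classes (c : ι → C) : marginalEntropy μ univ ≤ cost i₀ c + cost i₁ c := by
    have h₀ := marginalEntropy_univ_le hμ.1 (colourClass c i₀)
    have h₁ := marginalEntropy_univ_le hμ.1 (colourClass c i₁)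
    have hdisj : Disjoint (colourClass c i₀) (colourClass c i₁) :=
      disjoint_filter.2 fun j _ h₀ h₁ ↦ hne (h₀.symm.trans h₁)
    linarith [marginalEntropy_add_le hμ hdisj]
  have hq : (1 : ℝ) ≤ Fintype.card C := Nat.one_le_cast.2 Fintype.card_pos
  have expect_cost (i : C) : 𝔼 c, cost i c ≤ rowProduction univ.offDiag μ / Fintype.card C +
      2 ^ Fintype.card κ * (1 - 1 / (2 * Fintype.card C)) ^ Fintype.card ι +
        (δ * (marginalEntropy μ univ + 1) +
          Real.log (Fintype.card (ι → κ → ZMod 2)) * ∑ z ∈ B, μ z) := by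
    simp_rw [cost, expect_add_distrib]
    refine add_le_add (add_le_add (expect_rowProduction_colourClass_le hμ.1 i) ?_)
      (expect_sum_nonspanning_colourClass_mul_le hμ i hδ0 hδ)
    rw [expect_comm]
    refine (expect_le_expect fun z _ ↦ expect_nonspanning_colourClass_le i z).trans
      ((expect_weightEnumerator_le (sub_nonneg.2 ((div_le_one (by positivity)).2 hq))).trans_eq ?_)
    congr 2
    field_simp
    ring
  have average := le_expect (univ_nonempty (α := ι → C)) fun c _ ↦ two_classes c
  rw [expect_add_distrib] at average
  linarith [expect_cost i₀, expect_cost i₁]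

end EntropyInequality

/-! ### Functionals of small weight -/

/-- The potential of a functional of weight `w`: it is `1 / w` up to the threshold `m` and decays
geometrically beyond it. At `w = 0` it has the junk value `0`. -/
def weightPotential (m w : ℕ) : ℝ := (1 / 2) ^ (w - m) / (min w m : ℕ)

/-- `n (n - 1)` times the generator of the weight process of a functional: adding a row to another
one raises the weight `w` for `w (n - w)` ordered pairs of rows and lowers it for `w (w - 1)`. -/
def weightGenerator (n : ℕ) (F : ℕ → ℝ) (w : ℕ) : ℝ :=
  w * (n - w) * (F (w + 1) - F w) + w * (w - 1) * (F (w - 1) - F w)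

section Potential

variable {n m w : ℕ}

lemma weightPotential_nonneg (m w : ℕ) : 0 ≤ weightPotential m w := by
  rw [weightPotential]; positivity

lemma weightPotential_of_le (h : w ≤ m) : weightPotential m w = 1 / w := by
  rw [weightPotential, Nat.sub_eq_zero_of_le h, min_eq_left h, pow_zero]

lemma weightPotential_of_ge (h : m ≤ w) : weightPotential m w = (1 / 2) ^ (w - m) / m := by
  rw [weightPotential, min_eq_right h]

lemma weightPotential_succ_of_ge (h : m ≤ w) :
    weightPotential m (w + 1) = weightPotential m w / 2 := by
  rw [weightPotential_of_ge h, weightPotential_of_ge (by omega), Nat.sub_add_comm h, pow_succ]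
  ring

lemma weightPotential_le_one_div (hm : 1 ≤ m) (hw : 1 ≤ w) : weightPotential m w ≤ 1 / w := by
  obtain h | h := le_total w m
  · exact (weightPotential_of_le h).le
  obtain ⟨j, rfl⟩ := Nat.exists_eq_add_of_le h
  have growth : m + j ≤ m * 2 ^ j := by nlinarith [Nat.lt_two_pow_self (n := j)]
  rw [weightPotential_of_ge h, Nat.add_sub_cancel_left, div_pow, one_pow, div_div, mul_comm]
  exact one_div_le_one_div_of_le (by exact_mod_cast hw) (by exact_mod_cast growth)

lemma weightGenerator_weightPotential_le_of_le (hm : 1 ≤ m) (hw : 1 ≤ w) (hwm : w ≤ m)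
    (hwn : 6 * w ≤ n) :
    weightGenerator n (weightPotential m) w ≤ -(n / 4) * weightPotential m w := by
  have hw0 : (1 : ℝ) ≤ w := by exact_mod_cast hw
  have hwn' : 6 * (w : ℝ) ≤ n := by exact_mod_cast hwn
  have up : w * (n - w) * (weightPotential m (w + 1) - 1 / w) ≤ -((n - w : ℝ) / (2 * w)) := by
    have hsucc : weightPotential m (w + 1) ≤ 1 / ((w : ℝ) + 1) := by
      exact_mod_cast weightPotential_le_one_div hm w.succ_pos
    calc w * (n - w) * (weightPotential m (w + 1) - 1 / w)
        ≤ w * (n - w) * (1 / ((w : ℝ) + 1) - 1 / w) := by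
          refine mul_le_mul_of_nonneg_left (by linarith) (mul_nonneg (by linarith) (by linarith))
      _ = -((n - w : ℝ) / (w + 1)) := by field_simp; ring
      _ ≤ -((n - w : ℝ) / (2 * w)) :=
          neg_le_neg (div_le_div_of_nonneg_left (by linarith) (by linarith) (by linarith))
  have down : w * (w - 1) * (weightPotential m (w - 1) - 1 / w) ≤ 1 := by
    obtain rfl | hw2 := hw.eq_or_lt
    · norm_num
    have hw2' : (w : ℝ) - 1 ≠ 0 := sub_ne_zero.2 (by exact_mod_cast hw2.ne')
    rw [weightPotential_of_le ((w.sub_le 1).trans hwm), Nat.cast_pred hw]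
    apply le_of_eq
    field_simp
    ring
  have drift : 1 - (n - w : ℝ) / (2 * w) ≤ -(n / 4) * (1 / w) := by
    rw [← sub_nonneg]
    have : -(n / 4) * (1 / w) - (1 - (n - w : ℝ) / (2 * w)) = (n - 6 * w) / (4 * w) := by
      field_simp; ring
    rw [this]
    exact div_nonneg (by linarith) (by linarith)
  rw [weightGenerator, weightPotential_of_le hwm]
  linarith

lemma weightGenerator_weightPotential_of_lt (hwm : m < w) :
    weightGenerator n (weightPotential m) w =
      (w * (w - 1) - w * (n - w) / 2) * weightPotential m w := by
  obtain ⟨v, rfl⟩ : ∃ v, w = v + 1 := ⟨w - 1, by omega⟩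
  rw [weightGenerator, weightPotential_succ_of_ge hwm.le, Nat.add_sub_cancel,
    weightPotential_succ_of_ge (Nat.lt_succ_iff.1 hwm)]
  ring

lemma weightGenerator_weightPotential_le_of_lt (hwm : m < w) (hw2 : w ≤ 2 * m) (hmn : 12 * m ≤ n) :
    weightGenerator n (weightPotential m) w ≤ -(n / 4) * weightPotential m w := by
  rw [weightGenerator_weightPotential_of_lt hwm]
  refine mul_le_mul_of_nonneg_right ?_ (weightPotential_nonneg m w)
  have hw1 : (1 : ℝ) ≤ w := by exact_mod_cast Nat.one_le_of_lt hwm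
  have hw2' : (w : ℝ) ≤ 2 * m := by exact_mod_cast hw2
  have hmn' : 12 * (m : ℝ) ≤ n := by exact_mod_cast hmn
  nlinarith

lemma weightPotential_le_pow (hm : 1 ≤ m) (hw : 2 * m < w) :
    weightPotential m w ≤ (1 / 2) ^ m := by
  have hm' : (1 : ℝ) ≤ m := by exact_mod_cast hm
  rw [weightPotential_of_ge (by omega)]
  exact (div_le_self (by positivity) hm').trans
    (pow_le_pow_of_le_one (by norm_num) (by norm_num) (by omega))

lemma weightGenerator_weightPotential_le (hm : 1 ≤ m) (hmn : 12 * m ≤ n) (hw : 1 ≤ w)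
    (hwn : w ≤ n) :
    weightGenerator n (weightPotential m) w ≤
      -(n / 4) * weightPotential m w + 2 * (n * (n - 1)) * (1 / 2) ^ m := by
  have hn : (12 : ℝ) ≤ n := by exact_mod_cast (by omega : 12 ≤ n)
  have herr : 0 ≤ 2 * (n * (n - 1)) * (1 / 2 : ℝ) ^ m := by
    have : (0 : ℝ) ≤ n - 1 := by linarith
    positivity
  obtain hwm | hwm := le_or_gt w m
  · linarith [weightGenerator_weightPotential_le_of_le hm hw hwm (by omega : 6 * w ≤ n)]
  obtain hw2 | hw2 := le_or_gt w (2 * m)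
  · linarith [weightGenerator_weightPotential_le_of_lt hwm hw2 hmn]
  -- Here the potential is so small that the whole generator is absorbed by the error term.
  have hw' : (1 : ℝ) ≤ w := by exact_mod_cast hw
  have hwn' : (w : ℝ) ≤ n := by exact_mod_cast hwn
  have hcoeff : (w * (w - 1) - w * (n - w) / 2 + n / 4 : ℝ) ≤ 2 * (n * (n - 1)) := by
    nlinarith [mul_nonneg (by linarith : (0 : ℝ) ≤ w) (sub_nonneg.2 hwn')]
  rw [weightGenerator_weightPotential_of_lt hwm]
  nlinarith [mul_le_mul_of_nonneg_right hcoeff (weightPotential_nonneg m w),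
    mul_le_mul_of_nonneg_left (weightPotential_le_pow hm hw2)
      (by nlinarith : (0 : ℝ) ≤ 2 * (n * (n - 1)))]

end Potential

section WeightChain

variable {ι κ : Type*} [Fintype κ] [DecidableEq ι]

lemma dotProduct_rowAdd (l : κ → ZMod 2) (a b : ι) (z : ι → κ → ZMod 2) (j : ι) :
    l ⬝ᵥ rowAdd a b z j = if j = b then l ⬝ᵥ z b + l ⬝ᵥ z a else l ⬝ᵥ z j := by
  obtain rfl | h := eq_or_ne j b
  · simp [rowAdd, dotProduct_add]
  · simp [rowAdd, h]

variable [Fintype ι] {l : κ → ZMod 2} {z : ι → κ → ZMod 2} {a b : ι}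

lemma weight_rowAdd_of_eq_zero (ha : l ⬝ᵥ z a = 0) : weight l (rowAdd a b z) = weight l z := by
  refine congrArg card (filter_congr fun j _ ↦ ?_)
  rw [dotProduct_rowAdd, ha, add_zero]
  split_ifs with h <;> simp [h]

lemma weight_rowAdd_of_ne_zero_of_eq_zero (ha : l ⬝ᵥ z a ≠ 0) (hb : l ⬝ᵥ z b = 0) :
    weight l (rowAdd a b z) = weight l z + 1 := by
  rw [weight, weight, ← card_insert_of_notMem (a := b) (by simp [hb])]
  congr 1
  ext j
  obtain rfl | h := eq_or_ne j b
  · simp [dotProduct_rowAdd, hb, ha]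
  · simp [dotProduct_rowAdd, h]

lemma weight_rowAdd_of_ne_zero (ha : l ⬝ᵥ z a ≠ 0) (hb : l ⬝ᵥ z b ≠ 0) :
    weight l (rowAdd a b z) = weight l z - 1 := by
  have hsum : l ⬝ᵥ z b + l ⬝ᵥ z a = 0 := by
    revert ha hb
    generalize l ⬝ᵥ z a = x
    generalize l ⬝ᵥ z b = y
    revert x y
    decide
  rw [weight, weight, ← card_erase_of_mem (a := b) (by simp [hb])]
  congr 1
  ext j
  obtain rfl | h := eq_or_ne j b
  · simp [dotProduct_rowAdd, hsum]
  · simp [dotProduct_rowAdd, h]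

lemma expect_weight_rowAdd [Nontrivial ι] (F : ℕ → ℝ) (l : κ → ZMod 2) (z : ι → κ → ZMod 2) :
    𝔼 p ∈ univ.offDiag, F (weight l (rowAdd p.1 p.2 z)) =
      F (weight l z) + weightGenerator (Fintype.card ι) F (weight l z) /
        (Fintype.card ι * (Fintype.card ι - 1)) := by
  set A : Finset ι := {j | l ⬝ᵥ z j ≠ 0} with hA
  have change : ∀ p ∈ (univ : Finset ι).offDiag, F (weight l (rowAdd p.1 p.2 z)) =
      F (weight l z) + ((if p ∈ A ×ˢ Aᶜ then F (weight l z + 1) - F (weight l z) else 0) +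
        if p ∈ A.offDiag then F (weight l z - 1) - F (weight l z) else 0) := by
    rintro ⟨a, b⟩ hp
    have hab : a ≠ b := (mem_offDiag.1 hp).2.2
    by_cases ha : l ⬝ᵥ z a = 0
    · simp [hA, ha, weight_rowAdd_of_eq_zero]
    by_cases hb : l ⬝ᵥ z b = 0
    · simp [hA, ha, hb, weight_rowAdd_of_ne_zero_of_eq_zero]
    · simp [hA, ha, hb, hab, weight_rowAdd_of_ne_zero]
  have raising : univ.offDiag ∩ A ×ˢ Aᶜ = A ×ˢ Aᶜ := by
    refine inter_eq_right.2 fun p hp ↦ ?_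
    rw [mem_product, mem_compl] at hp
    exact mem_offDiag.2 ⟨mem_univ _, mem_univ _, fun h ↦ hp.2 (h ▸ hp.1)⟩
  have lowering : univ.offDiag ∩ A.offDiag = A.offDiag :=
    inter_eq_right.2 (offDiag_mono (subset_univ A))
  have card_raising : (#(A ×ˢ Aᶜ) : ℝ) = weight l z * (Fintype.card ι - weight l z) := by
    rw [card_product, card_compl, Nat.cast_mul, Nat.cast_sub (card_le_univ A)]; rfl
  have card_lowering : (#A.offDiag : ℝ) = weight l z * (weight l z - 1) := by
    rw [offDiag_card, Nat.cast_sub (Nat.le_mul_self _), Nat.cast_mul, mul_sub_one]; rfl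
  rw [expect_congr rfl change, expect_add_distrib, expect_const univ_offDiag_nonempty,
    expect_eq_sum_div_card, sum_add_distrib, sum_ite_mem, sum_ite_mem, raising, lowering,
    sum_const, sum_const, nsmul_eq_mul, nsmul_eq_mul, card_raising, card_lowering,
    cast_card_offDiag, weightGenerator]

end WeightChain

section TotalPotential

variable {ι κ : Type*} [Fintype ι] [Fintype κ] [DecidableEq κ] {m : ℕ}

/-- The sum of the weight potentials of all nonzero functionals, a Lyapunov function for the walk
that detects functionals of weight at most `m`. -/
def totalPotential (m : ℕ) (z : ι → κ → ZMod 2) : ℝ :=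
  ∑ l with l ≠ 0, weightPotential m (weight l z)

lemma totalPotential_nonneg (m : ℕ) (z : ι → κ → ZMod 2) : 0 ≤ totalPotential m z :=
  sum_nonneg fun l _ ↦ weightPotential_nonneg m (weight l z)

lemma totalPotential_le {z : ι → κ → ZMod 2} (hm : 1 ≤ m)
    (hz : ∀ l ≠ 0, 1 ≤ weight l z) : totalPotential m z ≤ 2 ^ Fintype.card κ := by
  refine (sum_le_card_nsmul _ _ 1 fun l hl ↦ ?_).trans ?_
  · have hw := hz l (mem_filter.1 hl).2
    exact (weightPotential_le_one_div hm hw).trans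
      (div_le_self zero_le_one (by exact_mod_cast hw))
  · simpa using card_ne_zero_le (κ := κ)

lemma rowStep_totalPotential_le [DecidableEq ι] {z : ι → κ → ZMod 2} (hm : 1 ≤ m)
    (hmn : 12 * m ≤ Fintype.card ι) (hz : ∀ l ≠ 0, 1 ≤ weight l z) :
    rowStep (totalPotential m) z ≤
      (1 - 1 / (8 * Fintype.card ι)) * totalPotential m z + 2 ^ Fintype.card κ * (1 / 2) ^ m := by
  have : Nontrivial ι := Fintype.one_lt_card_iff_nontrivial.1 (by omega)
  have hn : (12 : ℝ) ≤ Fintype.card ι := by exact_mod_cast (by omega : 12 ≤ Fintype.card ι)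
  have term : ∀ l ∈ univ.filter (· ≠ (0 : κ → ZMod 2)),
      (weightPotential m (weight l z) +
        𝔼 p ∈ univ.offDiag, weightPotential m (weight l (rowAdd p.1 p.2 z))) / 2 ≤
      (1 - 1 / (8 * Fintype.card ι)) * weightPotential m (weight l z) + (1 / 2) ^ m := by
    intro l hl
    have drift := weightGenerator_weightPotential_le hm hmn (hz l (mem_filter.1 hl).2)
      (card_le_univ _)
    have hx := weightPotential_nonneg m (weight l z)
    rw [expect_weight_rowAdd]
    generalize weightPotential m (weight l z) = x at drift hx ⊢
    generalize weightGenerator _ _ _ = g at drift ⊢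
    generalize (Fintype.card ι : ℝ) = n at hn drift ⊢
    have hpos : 0 < n * (n - 1) := mul_pos (by linarith) (by linarith)
    have hg : g / (n * (n - 1)) ≤ 2 * (1 / 2) ^ m - x / (4 * n) := by
      rw [div_le_iff₀ hpos]
      have : x / (4 * n) * (n * (n - 1)) = (n - 1) / 4 * x := by field_simp
      linarith
    have : (1 - 1 / (8 * n)) * x = x - x / (4 * n) / 2 := by ring
    linarith
  calc rowStep (totalPotential m) z
      = ∑ l with l ≠ 0, (weightPotential m (weight l z) +
          𝔼 p ∈ univ.offDiag, weightPotential m (weight l (rowAdd p.1 p.2 z))) / 2 := by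
        simp only [rowStep, lazyStep, totalPotential, expect_sum_comm, ← sum_div, sum_add_distrib]
    _ ≤ ∑ l with l ≠ 0, ((1 - 1 / (8 * Fintype.card ι)) * weightPotential m (weight l z) +
          (1 / 2) ^ m) := sum_le_sum term
    _ ≤ _ := by
        rw [sum_add_distrib, ← mul_sum, sum_const, nsmul_eq_mul, ← totalPotential]
        gcongr
        exact card_ne_zero_le

/-- The matrices for which some nonzero functional has weight at most `m`. -/
def lightMatrices [DecidableEq ι] (m : ℕ) : Finset (ι → κ → ZMod 2) := {z | ∃ l ≠ 0, weight l z ≤ m}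

lemma sum_lightMatrices_le [DecidableEq ι] {μ : (ι → κ → ZMod 2) → ℝ} (hm : 1 ≤ m) (hμ : 0 ≤ μ)
    (hpos : ∀ z, μ z ≠ 0 → ∀ l ≠ 0, 1 ≤ weight l z) :
    ∑ z ∈ lightMatrices m, μ z ≤ m * ∑ z, μ z * totalPotential m z := by
  have hm' : (0 : ℝ) < m := by exact_mod_cast hm
  have light (z : ι → κ → ZMod 2) (hz : z ∈ lightMatrices m) :
      μ z ≤ m * (μ z * totalPotential m z) := by
    obtain h0 | h0 := eq_or_ne (μ z) 0
    · simp [h0]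
    obtain ⟨l, hl, hw⟩ := (mem_filter.1 hz).2
    have hw0 : (0 : ℝ) < weight l z := by exact_mod_cast hpos z h0 l hl
    have : 1 / (m : ℝ) ≤ totalPotential m z := calc
      1 / (m : ℝ) ≤ 1 / weight l z := one_div_le_one_div_of_le hw0 (by exact_mod_cast hw)
      _ = weightPotential m (weight l z) := (weightPotential_of_le hw).symm
      _ ≤ totalPotential m z := single_le_sum (f := fun l ↦ weightPotential m (weight l z))
          (fun l _ ↦ weightPotential_nonneg m _) (mem_filter.2 ⟨mem_univ l, hl⟩)
    calc μ z = m * (μ z * (1 / m)) := by field_simp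
      _ ≤ m * (μ z * totalPotential m z) := by gcongr; exact hμ z
  rw [mul_sum]
  exact (sum_le_sum light).trans (sum_le_univ_sum_of_nonneg fun z ↦
    mul_nonneg hm'.le (mul_nonneg (hμ z) (totalPotential_nonneg m z)))

lemma sum_rowStep_mul_totalPotential_le [DecidableEq ι] {μ : (ι → κ → ZMod 2) → ℝ} (hm : 1 ≤ m)
    (hmn : 12 * m ≤ Fintype.card ι) (hμ : μ ∈ stdSimplex ℝ (ι → κ → ZMod 2))
    (hpos : ∀ z, μ z ≠ 0 → ∀ l ≠ 0, 1 ≤ weight l z) :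
    ∑ z, rowStep μ z * totalPotential m z ≤
      (1 - 1 / (8 * Fintype.card ι)) * ∑ z, μ z * totalPotential m z +
        2 ^ Fintype.card κ * (1 / 2) ^ m := by
  calc ∑ z, rowStep μ z * totalPotential m z
      = ∑ z, μ z * rowStep (totalPotential m) z :=
        sum_lazyStep_mul (fun p hp ↦ rowAdd_involutive_of_mem_offDiag hp) _ _
    _ ≤ ∑ z, μ z * ((1 - 1 / (8 * Fintype.card ι)) * totalPotential m z +
          2 ^ Fintype.card κ * (1 / 2) ^ m) := by
        refine sum_le_sum fun z _ ↦ ?_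
        obtain h0 | h0 := eq_or_ne (μ z) 0
        · simp [h0]
        · exact mul_le_mul_of_nonneg_left (rowStep_totalPotential_le hm hmn (hpos z h0)) (hμ.1 z)
    _ = _ := by
        simp only [mul_add, sum_add_distrib, ← sum_mul, hμ.2, one_mul]
        simp only [mul_sum, mul_left_comm (μ _)]

end TotalPotential

section LightMatrices

variable {n k m : ℕ} {x : TState n k}

lemma one_le_weight_of_mem_Stief (hx : x ∈ Stief n k) (l : Fin k → ZMod 2) (hl : l ≠ 0) :
    1 ≤ weight l x := by
  obtain ⟨i, hi⟩ := mem_Stief_iff.1 hx l hl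
  exact card_pos.2 ⟨i, mem_filter.2 ⟨mem_univ i, hi⟩⟩

lemma sum_transQ_pow_mul_totalPotential_le (hm : 1 ≤ m) (hmn : 12 * m ≤ n) (hx : x ∈ Stief n k)
    (t : ℕ) :
    ∑ z, (transQ n k ^ t) x z * totalPotential m z ≤
      8 * n * (2 ^ k * (1 / 2) ^ m) + Real.exp (-(t / (8 * n))) * 2 ^ k := by
  have : Nontrivial (Fin n) := Fin.nontrivial_iff_two_le.2 (by omega)
  have hn : (1 : ℝ) ≤ n := by exact_mod_cast (by omega : 1 ≤ n)
  set r : ℝ := 1 / (8 * n) with hr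
  set e : ℝ := 8 * n * (2 ^ k * (1 / 2) ^ m) with he
  have hre : r * e = 2 ^ k * (1 / 2) ^ m := by rw [hr, he]; field_simp
  have start : ∑ z, (transQ n k ^ 0) x z * totalPotential m z - e ≤ 2 ^ k := by
    have he0 : 0 ≤ e := by positivity
    have := totalPotential_le hm (one_le_weight_of_mem_Stief hx)
    rw [Fintype.card_fin] at this
    simp only [pow_zero, Matrix.one_apply, ite_mul, one_mul, zero_mul, sum_ite_eq, mem_univ,
      if_true]
    linarith
  have step (t : ℕ) : ∑ z, (transQ n k ^ (t + 1)) x z * totalPotential m z - e ≤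
      (1 - r) * (∑ z, (transQ n k ^ t) x z * totalPotential m z - e) := by
    have := sum_rowStep_mul_totalPotential_le hm (by rwa [Fintype.card_fin])
      (transQ_pow_mem_stdSimplex t x)
      fun z hz ↦ one_le_weight_of_mem_Stief (mem_Stief_of_transQ_pow_ne_zero hx t z hz)
    rw [Fintype.card_fin, Fintype.card_fin, ← hr, ← transQ_pow_succ] at this
    linarith
  have decay := le_exp_mul_of_contraction
    (u := fun t ↦ ∑ z, (transQ n k ^ t) x z * totalPotential m z - e)
    (div_le_one_of_le₀ (by linarith) (by linarith)) (by positivity) start step t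
  rw [one_div_mul_eq_div] at decay
  linarith

lemma sum_lightMatrices_transQ_pow_le (hm : 1 ≤ m) (hmn : 12 * m ≤ n) (hx : x ∈ Stief n k)
    (t : ℕ) :
    ∑ z ∈ lightMatrices m, (transQ n k ^ t) x z ≤
      m * (8 * n * (2 ^ k * (1 / 2) ^ m) + Real.exp (-(t / (8 * n))) * 2 ^ k) := by
  have : Nontrivial (Fin n) := Fin.nontrivial_iff_two_le.2 (by omega)
  refine (sum_lightMatrices_le hm (transQ_pow_mem_stdSimplex t x).1
    fun z hz ↦ one_le_weight_of_mem_Stief (mem_Stief_of_transQ_pow_ne_zero hx t z hz)).trans ?_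
  gcongr
  exact sum_transQ_pow_mul_totalPotential_le hm hmn hx t

end LightMatrices

/-! ### Entropy decay for few columns -/

lemma two_pow_le_exp (k : ℕ) : (2 : ℝ) ^ k ≤ Real.exp k := by
  rw [← Real.exp_one_pow]
  exact pow_le_pow_left₀ two_pos.le (by linarith [Real.exp_one_gt_d9]) k

lemma two_pow_mul_exp_neg_le {k : ℕ} (hk : 1 ≤ k) :
    (2 : ℝ) ^ k * Real.exp (-(10 * k)) ≤ 1 / 2048 := by
  have hk' : (1 : ℝ) ≤ k := by exact_mod_cast hk
  calc (2 : ℝ) ^ k * Real.exp (-(10 * k)) ≤ Real.exp k * Real.exp (-(10 * k)) := by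
        gcongr; exact two_pow_le_exp k
    _ = Real.exp (-(9 * k)) := by rw [← Real.exp_add]; ring_nf
    _ ≤ Real.exp (-9) := Real.exp_le_exp.2 (by linarith)
    _ = (Real.exp 1 ^ 9)⁻¹ := by rw [Real.exp_one_pow, ← Real.exp_neg]; norm_num
    _ ≤ (2.7 ^ 9)⁻¹ := by gcongr; linarith [Real.exp_one_gt_d9]
    _ ≤ 1 / 2048 := by norm_num

lemma one_sub_one_div_pow_le {a b : ℝ} {n : ℕ} (ha : 1 ≤ a) (hab : a * b ≤ n) :
    (1 - 1 / a) ^ n ≤ Real.exp (-b) := by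
  have ha0 : 0 < a := one_pos.trans_le ha
  calc (1 - 1 / a) ^ n ≤ Real.exp (-(1 / a)) ^ n :=
        pow_le_pow_left₀ (sub_nonneg.2 ((div_le_one ha0).2 ha)) (Real.one_sub_le_exp_neg _) n
    _ = Real.exp (-(n / a)) := by rw [← Real.exp_nat_mul]; ring_nf
    _ ≤ Real.exp (-b) :=
        Real.exp_le_exp.2 (neg_le_neg ((le_div_iff₀ ha0).2 (by rwa [mul_comm])))

section FewColumns

variable {ι κ : Type*} [Fintype ι] [Fintype κ] [DecidableEq ι] [DecidableEq κ]

lemma weightEnumerator_le_of_notMem_lightMatrices {r : ℝ} (hr0 : 0 ≤ r) (hr1 : r ≤ 1) {m : ℕ}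
    {z : ι → κ → ZMod 2} (hz : z ∉ lightMatrices m) :
    weightEnumerator r z ≤ 2 ^ Fintype.card κ * r ^ m := by
  have term : ∀ l ∈ univ.filter (· ≠ (0 : κ → ZMod 2)), r ^ weight l z ≤ r ^ m := by
    refine fun l hl ↦ pow_le_pow_of_le_one hr0 hr1 (le_of_not_ge fun h ↦ hz ?_)
    exact mem_filter.2 ⟨mem_univ z, l, (mem_filter.1 hl).2, h⟩
  refine (sum_le_card_nsmul _ _ _ term).trans ?_
  rw [nsmul_eq_mul]
  exact mul_le_mul_of_nonneg_right card_ne_zero_le (by positivity)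

lemma negEntropy_add_log_card_le_of_lightMatrices {μ : (ι → κ → ZMod 2) → ℝ} {q : ℕ}
    (hκ : 1 ≤ Fintype.card κ) (hq : 2 ≤ q) (hι : 20 * Fintype.card κ * q ≤ Fintype.card ι)
    (hμ : μ ∈ stdSimplex ℝ (ι → κ → ZMod 2))
    (hlight : Real.log (Fintype.card (ι → κ → ZMod 2)) *
      ∑ z ∈ lightMatrices (10 * Fintype.card κ * q), μ z ≤ 1 / 1024) :
    negEntropy μ + Real.log (Fintype.card (ι → κ → ZMod 2)) ≤
      rowProduction univ.offDiag μ / (q / 4) + 1 / 128 := by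
  have : Nontrivial (Fin q) := Fin.nontrivial_iff_two_le.2 hq
  have hq' : (2 : ℝ) ≤ q := by exact_mod_cast hq
  have hι' : 20 * (Fintype.card κ : ℝ) * q ≤ Fintype.card ι := by exact_mod_cast hι
  set δ : ℝ := 2 ^ Fintype.card κ * Real.exp (-(10 * Fintype.card κ))
  have hδ : δ ≤ 1 / 2048 := two_pow_mul_exp_neg_le hκ
  have heavy : ∀ z ∉ (lightMatrices (10 * Fintype.card κ * q) : Finset (ι → κ → ZMod 2)),
      weightEnumerator (1 - 1 / (Fintype.card (Fin q) : ℝ)) z ≤ δ := fun z hz ↦ by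
    have hq1 : 1 / (q : ℝ) ≤ 1 := (div_le_one (by linarith)).2 (by linarith)
    have hq0 : 0 ≤ 1 / (q : ℝ) := by positivity
    rw [Fintype.card_fin]
    refine (weightEnumerator_le_of_notMem_lightMatrices (by linarith) (by linarith) hz).trans ?_
    refine mul_le_mul_of_nonneg_left ?_ (by positivity)
    exact one_sub_one_div_pow_le (by linarith) (by push_cast; linarith)
  have decay := marginalEntropy_univ_le_rowProduction_div (C := Fin q) hμ (by positivity) heavy
  have nonspanning_mass :
      2 ^ Fintype.card κ * (1 - 1 / (2 * (q : ℝ))) ^ Fintype.card ι ≤ δ := by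
    refine mul_le_mul_of_nonneg_left ?_ (by positivity)
    exact one_sub_one_div_pow_le (by linarith) (by linarith)
  have entropy_nonneg : 0 ≤ marginalEntropy μ univ := by
    simpa [marginalEntropy, marginalDensity_empty, hμ.2] using
      marginalEntropy_add_le hμ (disjoint_empty_left ∅)
  have hδμ := mul_le_mul_of_nonneg_right hδ entropy_nonneg
  have hquot : rowProduction univ.offDiag μ / (q / 4) =
      4 * (rowProduction univ.offDiag μ / q) := by field_simp
  rw [Fintype.card_fin] at decay
  rw [← marginalEntropy_univ hμ.2, hquot]
  linarith

end FewColumns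

section UniformMatrices

lemma tvDist_unifOn_univ_unifOn {X : Type*} [Fintype X] {G : Set X} (hG : G.Nonempty) :
    tvDist (unifOn Set.univ) (unifOn G) = 1 - Nat.card G / Fintype.card X := by
  classical
  have := hG.to_subtype
  have hcard : (0 : ℝ) < Nat.card G := by exact_mod_cast Nat.card_pos
  have hle : (Nat.card G : ℝ) ≤ Fintype.card X := by
    exact_mod_cast (Nat.card_eq_fintype_card (α := X)) ▸ Finite.card_subtype_le (· ∈ G)
  have hX : (0 : ℝ) < Fintype.card X := hcard.trans_le hle
  have term (x : X) : |unifOn Set.univ x - unifOn G x| = (Fintype.card X : ℝ)⁻¹ +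
      if x ∈ G then (Nat.card G : ℝ)⁻¹ - 2 * (Fintype.card X : ℝ)⁻¹ else 0 := by
    rw [unifOn, unifOn, if_pos (Set.mem_univ x), Nat.card_univ, Nat.card_eq_fintype_card]
    split_ifs
    · rw [abs_of_nonpos (sub_nonpos.2 (inv_anti₀ hcard hle))]; ring
    · rw [sub_zero, add_zero, abs_of_pos (inv_pos.2 hX)]
  rw [tvDist, sum_congr rfl fun x _ ↦ term x, sum_add_distrib, sum_const, card_univ,
    nsmul_eq_mul, sum_ite_mem_const]
  field_simp
  ring

open scoped Classical in
lemma ite_mem_Stief_le_weightEnumerator {n k : ℕ} (z : TState n k) :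
    (if z ∈ Stief n k then 0 else 1 : ℝ) ≤ weightEnumerator 0 z := by
  split_ifs with hz
  · exact sum_nonneg fun l _ ↦ by positivity
  rw [mem_Stief_iff] at hz
  push Not at hz
  obtain ⟨l, hl, hz⟩ := hz
  have hw : weight l z = 0 := card_eq_zero.2 (filter_eq_empty_iff.2 fun i _ ↦ not_not.2 (hz i))
  refine le_of_eq_of_le ?_ (single_le_sum (f := fun l ↦ (0 : ℝ) ^ weight l z)
    (fun l _ ↦ by positivity) (mem_filter.2 ⟨mem_univ l, hl⟩))
  rw [hw, pow_zero]

lemma one_sub_card_Stief_div_le (n k : ℕ) :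
    1 - Nat.card (Stief n k) / (Fintype.card (TState n k) : ℝ) ≤ 2 ^ k * (1 / 2) ^ n := by
  classical
  calc 1 - Nat.card (Stief n k) / (Fintype.card (TState n k) : ℝ)
      = 𝔼 z : TState n k, (if z ∈ Stief n k then 0 else 1 : ℝ) := by
        have hcompl (z : TState n k) : (if z ∈ Stief n k then 0 else 1 : ℝ) =
            1 - if z ∈ Stief n k then 1 else 0 := by split_ifs <;> norm_num
        simp_rw [hcompl]
        rw [expect_sub_distrib, Fintype.expect_const, Fintype.expect_eq_sum_div_card,
          sum_ite_mem_const, mul_one]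
    _ ≤ 𝔼 z : TState n k, weightEnumerator 0 z :=
        expect_le_expect fun z _ ↦ ite_mem_Stief_le_weightEnumerator z
    _ ≤ 2 ^ k * (1 / 2) ^ n := by
        simpa using expect_weightEnumerator_le (ι := Fin n) (κ := Fin k) le_rfl

end UniformMatrices

section TransvectionWalk

variable {n k q t₀ t₁ : ℕ} {x : TState n k}

lemma tvDist_unifOn_univ_unifOn_Stief_le (hx : x ∈ Stief n k) (hkn : k + 4 ≤ n) :
    tvDist (unifOn Set.univ) (unifOn (Stief n k)) ≤ 1 / 16 := by
  rw [tvDist_unifOn_univ_unifOn ⟨x, hx⟩]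
  refine (one_sub_card_Stief_div_le n k).trans ?_
  calc (2 : ℝ) ^ k * (1 / 2) ^ n ≤ 2 ^ k * (1 / 2) ^ (k + 4) := by
        gcongr ?_ * ?_
        exact pow_le_pow_of_le_one (by norm_num) (by norm_num) hkn
    _ = 1 / 16 := by rw [pow_add, ← mul_assoc, ← mul_pow]; norm_num

lemma tvDist_transQ_pow_add_le_of_lightMatrices (hk : 1 ≤ k) (hq : 2 ≤ q) (hn : 20 * k * q ≤ n)
    (hx : x ∈ Stief n k)
    (hlight : ∀ t ≥ t₀, Real.log (Fintype.card (TState n k)) *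
      ∑ z ∈ lightMatrices (10 * k * q), (transQ n k ^ t) x z ≤ 1 / 1024)
    (ht : (n : ℝ) ^ 2 * Real.exp (-(q * t₁ / (4 * (n : ℝ) ^ 2))) ≤ 1 / 128) :
    tvDist ((transQ n k ^ (t₀ + t₁)) x) (unifOn (Stief n k)) ≤ 1 / 4 := by
  have hkn : k + 4 ≤ n := by nlinarith
  have hqn : q ≤ n := by nlinarith
  have : Nontrivial (Fin n) := Fin.nontrivial_iff_two_le.2 (by omega)
  have hq' : (2 : ℝ) ≤ q := by exact_mod_cast hq
  have hqn' : (q : ℝ) ≤ n := by exact_mod_cast hqn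
  have hkn' : (k : ℝ) ≤ n := by exact_mod_cast (by omega : k ≤ n)
  have production (t : ℕ) (h : t ≥ t₀) :=
    negEntropy_add_log_card_le_of_lightMatrices (q := q) (by simpa using hk) hq
      (by simpa using hn) (transQ_pow_mem_stdSimplex t x) (by simpa using hlight t h)
  have hγ : (q / 4 : ℝ) ≤ n * (n - 1) := by nlinarith
  have decay := negEntropy_transQ_pow_add_le (γ := q / 4) (δ := 1 / 128) (t₀ := t₀)
    (c := Real.log (Fintype.card (TState n k))) (by linarith) hγ
    (Real.log_natCast_nonneg _) (by norm_num) production t₁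
  have initial : Real.exp (-(q / 4 / (n * (n - 1)) * t₁)) *
      Real.log (Fintype.card (TState n k)) ≤ 1 / 128 := by
    refine le_trans ?_ ht
    rw [mul_comm]
    gcongr
    · exact (log_card_TState_le n k).trans (by nlinarith)
    · rw [div_div, div_mul_eq_mul_div]
      gcongr
      · nlinarith
      · nlinarith
  have hsq := sq_tvDist_unifOn_le (transQ_pow_mem_stdSimplex (t₀ + t₁) x)
    (G := Set.univ) fun z _ ↦ Set.mem_univ z
  rw [Nat.card_univ, Nat.card_eq_fintype_card] at hsq
  have huniv : tvDist ((transQ n k ^ (t₀ + t₁)) x) (unifOn Set.univ) ≤ 1 / 8 :=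
    abs_le_of_sq_le_sq' (by linarith) (by norm_num) |>.2
  linarith [tvDist_triangle ((transQ n k ^ (t₀ + t₁)) x) (unifOn Set.univ) (unifOn (Stief n k)),
    tvDist_unifOn_univ_unifOn_Stief_le hx hkn]

lemma eventually_pow_mul_pow_div_le :
    ∀ᶠ n : ℕ in Filter.atTop, 8 * (n : ℝ) ^ 4 * (1 / 2) ^ (n / 22) ≤ 1 / 2048 := by
  have decay : ∀ᶠ j : ℕ in Filter.atTop, (j : ℝ) ^ 4 * (1 / 2) ^ j < 1 / (2048 * 8 * 44 ^ 4) :=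
    (tendsto_pow_const_mul_const_pow_of_lt_one 4 (by norm_num) (by norm_num)).eventually_lt_const
      (by norm_num)
  filter_upwards [(Nat.tendsto_div_const_atTop (by norm_num : 22 ≠ 0)).eventually decay,
    Filter.eventually_ge_atTop 22] with n hsmall hn
  have hdiv : (n : ℝ) ≤ 44 * (n / 22 : ℕ) := by exact_mod_cast (by omega : n ≤ 44 * (n / 22))
  calc 8 * (n : ℝ) ^ 4 * (1 / 2) ^ (n / 22)
      ≤ 8 * (44 * (n / 22 : ℕ) : ℝ) ^ 4 * (1 / 2) ^ (n / 22) := by gcongr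
    _ = 8 * 44 ^ 4 * (((n / 22 : ℕ) : ℝ) ^ 4 * (1 / 2) ^ (n / 22)) := by ring
    _ ≤ 1 / 2048 := by linarith

lemma exp_neg_mul_log_natCast (hn : 0 < n) (i : ℕ) :
    Real.exp (-(i * Real.log n)) = 1 / (n : ℝ) ^ i := by
  have : (0 : ℝ) < n := by exact_mod_cast hn
  rw [Real.exp_neg, one_div, ← Real.log_pow, Real.exp_log (by positivity)]

lemma log_card_mul_sum_lightMatrices_le {m t : ℕ} (hn : 2048 ≤ n)
    (hsmall : 8 * (n : ℝ) ^ 4 * (1 / 2) ^ (n / 22) ≤ 1 / 2048) (hm : k + n / 22 ≤ m)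
    (hmn : 12 * m ≤ n) (hx : x ∈ Stief n k) (ht : 8 * n * (k + 4 * Real.log n) ≤ t) :
    Real.log (Fintype.card (TState n k)) * ∑ z ∈ lightMatrices m, (transQ n k ^ t) x z ≤
      1 / 1024 := by
  have : Nontrivial (Fin n) := Fin.nontrivial_iff_two_le.2 (by omega)
  have hn' : (2048 : ℝ) ≤ n := by exact_mod_cast hn
  have hkn : (k : ℝ) ≤ n := by exact_mod_cast (by omega : k ≤ n)
  have hmn' : (m : ℝ) ≤ n := by exact_mod_cast (by omega : m ≤ n)
  have stationary : (2 : ℝ) ^ k * (1 / 2) ^ m ≤ (1 / 2) ^ (n / 22) := calc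
    (2 : ℝ) ^ k * (1 / 2) ^ m ≤ 2 ^ k * (1 / 2) ^ (k + n / 22) := by
        gcongr ?_ * ?_
        exact pow_le_pow_of_le_one (by norm_num) (by norm_num) hm
    _ = (1 / 2) ^ (n / 22) := by rw [pow_add, ← mul_assoc, ← mul_pow]; norm_num
  have transient : Real.exp (-(t / (8 * n))) * 2 ^ k ≤ 1 / (n : ℝ) ^ 4 := calc
    Real.exp (-(t / (8 * n))) * 2 ^ k ≤ Real.exp (-(k + 4 * Real.log n)) * Real.exp k := by
        gcongr
        · rw [le_div_iff₀ (by linarith)]; linarith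
        · exact two_pow_le_exp k
    _ = Real.exp (-(4 * Real.log n)) := by rw [← Real.exp_add]; ring_nf
    _ = 1 / (n : ℝ) ^ 4 := mod_cast exp_neg_mul_log_natCast (by omega : 0 < n) 4
  calc Real.log (Fintype.card (TState n k)) * ∑ z ∈ lightMatrices m, (transQ n k ^ t) x z
      ≤ (n * k) * (m * (8 * n * (2 ^ k * (1 / 2) ^ m) + Real.exp (-(t / (8 * n))) * 2 ^ k)) := by
        gcongr
        · exact sum_nonneg fun z _ ↦ (transQ_pow_mem_stdSimplex t x).1 z
        · exact log_card_TState_le n k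
        · exact sum_lightMatrices_transQ_pow_le (by omega) hmn hx t
    _ ≤ (n * n) * (n * (8 * n * (1 / 2) ^ (n / 22) + 1 / (n : ℝ) ^ 4)) := by gcongr
    _ = 8 * (n : ℝ) ^ 4 * (1 / 2) ^ (n / 22) + 1 / n := by field_simp
    _ ≤ 1 / 2048 + 1 / 2048 := add_le_add hsmall (one_div_le_one_div_of_le (by norm_num) hn')
    _ = 1 / 1024 := by norm_num

lemma sq_mul_exp_neg_le (hn : 128 ≤ n) (hnq : n ≤ 195 * (k * q))
    (ht : 2340 * (n * k * Real.log n) ≤ t₁) :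
    (n : ℝ) ^ 2 * Real.exp (-(q * t₁ / (4 * (n : ℝ) ^ 2))) ≤ 1 / 128 := by
  have hn' : (128 : ℝ) ≤ n := by exact_mod_cast hn
  have : (0 : ℝ) < n := by linarith
  have : 0 ≤ Real.log n := Real.log_natCast_nonneg n
  have hnq' : (n : ℝ) ≤ 195 * (k * q) := by exact_mod_cast hnq
  have hexp : 3 * Real.log n ≤ q * t₁ / (4 * (n : ℝ) ^ 2) := by
    rw [le_div_iff₀ (by positivity)]
    calc 3 * Real.log n * (4 * (n : ℝ) ^ 2) = 12 * n * Real.log n * n := by ring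
      _ ≤ 12 * n * Real.log n * (195 * (k * q)) := by gcongr
      _ = q * (2340 * (n * k * Real.log n)) := by ring
      _ ≤ q * t₁ := by gcongr
  calc (n : ℝ) ^ 2 * Real.exp (-(q * t₁ / (4 * (n : ℝ) ^ 2)))
      ≤ (n : ℝ) ^ 2 * Real.exp (-(3 * Real.log n)) := by gcongr
    _ = (n : ℝ) ^ 2 * (1 / (n : ℝ) ^ 3) := by
        congr 1
        exact mod_cast exp_neg_mul_log_natCast (by omega : 0 < n) 3
    _ = 1 / (n : ℝ) := by field_simp
    _ ≤ 1 / 128 := one_div_le_one_div_of_le (by norm_num) hn'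

lemma one_le_log_natCast (hn : 3 ≤ n) : 1 ≤ Real.log n := by
  have hn' : (3 : ℝ) ≤ n := by exact_mod_cast hn
  exact (Real.le_log_iff_exp_le (by linarith)).2 (by linarith [Real.exp_one_lt_d9])

/- With `q = n / (130 k)` the burn-in time of the light functionals is `O(n k log n)` and the
entropy decays at rate `q / (4 n ^ 2)`, which is of order `1 / (n k)`. -/
lemma mixTime_transQ_le_of_le (hk : 1 ≤ k) (hkn : 260 * k ≤ n) (hn : 2048 ≤ n)
    (hsmall : 8 * (n : ℝ) ^ 4 * (1 / 2) ^ (n / 22) ≤ 1 / 2048) :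
    (mixTime (transQ n k) (unifOn (Stief n k)) (Stief n k) : ℝ) ≤
      2382 * (n * k * Real.log n) := by
  have hn' : (2048 : ℝ) ≤ n := by exact_mod_cast hn
  have hk' : (1 : ℝ) ≤ k := by exact_mod_cast hk
  have hlog : 1 ≤ Real.log n := one_le_log_natCast (by omega)
  obtain ⟨q, hq, hqn, hnq⟩ : ∃ q, 2 ≤ q ∧ 130 * (k * q) ≤ n ∧ n < 130 * (k * q) + 130 * k := by
    refine ⟨n / (130 * k), (Nat.le_div_iff_mul_le (by omega)).2 (by omega), ?_, ?_⟩
    · rw [← mul_assoc]; exact Nat.mul_div_le n _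
    · rw [← mul_assoc]; exact Nat.lt_mul_div_succ n (by omega : 0 < 130 * k)
  have hkq : 2 * k ≤ k * q := by nlinarith
  set T : ℝ := n * k * Real.log n with hT
  have hT1 : 1 ≤ T := one_le_mul_of_one_le_of_one_le (by nlinarith) hlog
  have burn_in : 8 * n * (k + 4 * Real.log n) ≤ ⌈40 * T⌉₊ := by
    refine le_trans ?_ (Nat.le_ceil _)
    rw [hT]
    nlinarith [mul_le_mul_of_nonneg_left hlog (by positivity : (0 : ℝ) ≤ n * k),
      mul_le_mul_of_nonneg_left hk' (by positivity : (0 : ℝ) ≤ n * Real.log n)]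
  have mix : mixTime (transQ n k) (unifOn (Stief n k)) (Stief n k) ≤ ⌈40 * T⌉₊ + ⌈2340 * T⌉₊ := by
    refine Nat.sInf_le fun x hx ↦ tvDist_transQ_pow_add_le_of_lightMatrices hk hq
      (by nlinarith) hx (fun t ht ↦ ?_) ?_
    · exact log_card_mul_sum_lightMatrices_le hn hsmall (by rw [mul_assoc]; omega)
        (by rw [mul_assoc]; omega) hx
        (burn_in.trans (by exact_mod_cast ht))
    · exact sq_mul_exp_neg_le (by omega) (by omega) (Nat.le_ceil _)
  calc (mixTime (transQ n k) (unifOn (Stief n k)) (Stief n k) : ℝ)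
      ≤ ⌈40 * T⌉₊ + ⌈2340 * T⌉₊ := by exact_mod_cast mix
    _ ≤ (40 * T + 1) + (2340 * T + 1) := add_le_add
        (Nat.ceil_lt_add_one (by linarith)).le (Nat.ceil_lt_add_one (by linarith)).le
    _ ≤ 2382 * T := by linarith

lemma mixTime_transQ_le_of_ge (hk : 1 ≤ k) (hkn : k ≤ n) (hnk : n ≤ 260 * k) (hn : 64 ≤ n) :
    (mixTime (transQ n k) (unifOn (Stief n k)) (Stief n k) : ℝ) ≤
      7021 * (n * k * Real.log n) := by
  have hn' : (64 : ℝ) ≤ n := by exact_mod_cast hn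
  have hk' : (1 : ℝ) ≤ k := by exact_mod_cast hk
  have hnk' : (n : ℝ) ≤ 260 * k := by exact_mod_cast hnk
  have hlog : 1 ≤ Real.log n := one_le_log_natCast (by omega)
  have mix : mixTime (transQ n k) (unifOn (Stief n k)) (Stief n k) ≤
      ⌈27 * (n : ℝ) ^ 2 * Real.log n⌉₊ :=
    Nat.sInf_le fun x hx ↦ tvDist_transQ_pow_le_of_sq_mul_log_le hn hkn (Nat.le_ceil _) hx
  calc (mixTime (transQ n k) (unifOn (Stief n k)) (Stief n k) : ℝ)
      ≤ ⌈27 * (n : ℝ) ^ 2 * Real.log n⌉₊ := by exact_mod_cast mix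
    _ ≤ 27 * (n : ℝ) ^ 2 * Real.log n + 1 := (Nat.ceil_lt_add_one (by positivity)).le
    _ = 27 * n * Real.log n * n + 1 := by ring
    _ ≤ 27 * n * Real.log n * (260 * k) + n * k * Real.log n := by
        gcongr
        exact one_le_mul_of_one_le_of_one_le (by nlinarith) hlog
    _ = 7021 * (n * k * Real.log n) := by ring

end TransvectionWalk

theorem stmt0 (_B : ℝ) :
    ∃ C : ℝ, 0 < C ∧ ∃ N : ℕ, ∀ n : ℕ, N ≤ n → ∀ k : ℕ, 1 ≤ k → k ≤ n →
      (mixTime (transQ n k) (unifOn (Stief n k)) (Stief n k) : ℝ) ≤ C * n * k * Real.log n := by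
  obtain ⟨N, hN⟩ := Filter.eventually_atTop.1 eventually_pow_mul_pow_div_le
  refine ⟨7021, by norm_num, max N 2048, fun n hn k hk hkn ↦ ?_⟩
  have hn2048 : 2048 ≤ n := (le_max_right _ _).trans hn
  rw [mul_assoc, mul_assoc, ← mul_assoc (n : ℝ)]
  obtain few | many := le_total (260 * k) n
  · refine (mixTime_transQ_le_of_le hk few hn2048 (hN n ((le_max_left _ _).trans hn))).trans ?_
    exact mul_le_mul_of_nonneg_right (by norm_num)
      (mul_nonneg (by positivity) (Real.log_natCast_nonneg n))
  · exact mixTime_transQ_le_of_ge hk hkn many (by omega)
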